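/- arXiv:2408.14616 — 5 statements merged into one kernel-verified Lean document; each statement's English description precedes it below -/
import Mathlib

section
/- Let m, n be positive integers and let f : ℝ^m → ℝ^n be infinitely differentiable (C^∞). Then the set of critical values of f, namely { y ∈ ℝ^n : ∃ x ∈ ℝ^m, f(x) = y and the Fréchet derivative Df(x) : ℝ^m → ℝ^n is not surjective }, has Lebesgue measure zero in ℝ^n. -/
open MeasureTheory
open scoped ContDiff

/-!
Let `m = dim E` and induct on `m`. A critical point of a smooth map `f : E → F` is of one of three
kinds.

* `Df x ≠ 0`. Some linear functional `χ` has `D(χ ∘ f) x ≠ 0`, so `χ ∘ f` can serve as the first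
  coordinate of a chart at `x` and `χ` as the first coordinate of `F`. In these coordinates
  `f (b, k) = (b, f_b k)`, the critical points of `f` are critical for the slices `f_b`, and the
  induction hypothesis for the slices gives the result by Fubini.
* `Dⁱf x = 0` but `D(Dⁱf) x ≠ 0` for some `i`. Then `x` lies on a hypersurface on which a scalar
  component of `Dⁱf` vanishes, `x` is critical for the restriction of `f` to this hypersurface,
  and the induction hypothesis applies.
* `D¹f, …, Dᵐf` all vanish at `x`. By Taylor's formula `f` is locally `(m + 1)`-Hölder on the set
  of such points, so its image has Hausdorff dimension at most `m / (m + 1) < 1 ≤ dim F` (and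
  there are no critical points when `dim F = 0`).
-/

open Set Filter Topology Module
open scoped NNReal ENNReal

variable {E F G B : Type*} [NormedAddCommGroup E] [NormedSpace ℝ E]
  [NormedAddCommGroup F] [NormedSpace ℝ F] [NormedAddCommGroup G] [NormedSpace ℝ G]
  [NormedAddCommGroup B] [NormedSpace ℝ B]

/-- The critical points of `f`: those at which the derivative is not surjective. Since `fderiv` is
zero at points of non-differentiability, such points are critical unless `F` is trivial. -/
def criticalPoints (f : E → F) : Set E :=
  {x | ¬ Function.Surjective (fderiv ℝ f x)}

section CriticalPoints

theorem mem_criticalPoints_comp {f : F → G} {g : E → F} {x : E} (hf : DifferentiableAt ℝ f (g x))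
    (hg : DifferentiableAt ℝ g x) (hx : g x ∈ criticalPoints f) : x ∈ criticalPoints (f ∘ g) := by
  intro hsurj
  rw [fderiv_comp x hf hg, ContinuousLinearMap.coe_comp] at hsurj
  exact hx hsurj.of_comp

theorem criticalPoints_continuousLinearEquiv_comp (e : F ≃L[ℝ] G) (f : E → F) :
    criticalPoints (e ∘ f) = criticalPoints f := by
  ext x
  change ¬ Function.Surjective (fderiv ℝ (e ∘ f) x) ↔ _
  rw [e.comp_fderiv]
  exact not_congr (e.toEquiv.comp_surjective _)

theorem criticalPoints_eq_empty_of_subsingleton [Subsingleton F] (f : E → F) :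
    criticalPoints f = ∅ :=
  eq_empty_of_forall_notMem fun _ hx => hx (Function.surjective_to_subsingleton _)

theorem isOpen_setOf_surjective [FiniteDimensional ℝ F] :
    IsOpen {L : E →L[ℝ] F | Function.Surjective L} := by
  have hrank : ∀ L : E →L[ℝ] F,
      Function.Surjective L ↔ (finrank ℝ F : Cardinal) ≤ (L : E →ₗ[ℝ] F).rank := by
    intro L
    rw [← ContinuousLinearMap.coe_coe, ← LinearMap.range_eq_top, LinearMap.rank,
      ← finrank_eq_rank, Nat.cast_le]
    exact ⟨fun h => by rw [h, finrank_top], fun h =>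
      Submodule.eq_top_of_finrank_eq ((Submodule.finrank_le _).antisymm h)⟩
  simpa only [hrank] using isOpen_setOfPred_nat_le_rank (finrank ℝ F)

theorem isLocallyClosed_inter_criticalPoints [FiniteDimensional ℝ F] {f : E → F} {U : Set E}
    (hU : IsOpen U) (hf : ContDiffOn ℝ 1 f U) : IsLocallyClosed (U ∩ criticalPoints f) := by
  have hregular : IsOpen (U ∩ fderiv ℝ f ⁻¹' {L | Function.Surjective L}) :=
    (hf.continuousOn_fderiv_of_isOpen hU le_rfl).isOpen_inter_preimage hU isOpen_setOf_surjective
  have heq : U ∩ criticalPoints f = U ∩ (U ∩ fderiv ℝ f ⁻¹' {L | Function.Surjective L})ᶜ := by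
    ext x
    simp +contextual [criticalPoints]
  rw [heq]
  exact hU.isLocallyClosed.inter hregular.isClosed_compl.isLocallyClosed

theorem measurableSet_image_criticalPoints [FiniteDimensional ℝ E] [FiniteDimensional ℝ F]
    [MeasurableSpace F] [BorelSpace F] {f : E → F} {U : Set E} (hU : IsOpen U)
    (hf : ContDiffOn ℝ 1 f U) : MeasurableSet (f '' (U ∩ criticalPoints f)) := by
  have := (isLocallyClosed_inter_criticalPoints hU hf).locallyCompactSpace
  have hcompact : IsSigmaCompact (f '' (U ∩ criticalPoints f)) :=
    (isSigmaCompact_iff_sigmaCompactSpace.2 inferInstance).image_of_continuousOn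
      (hf.continuousOn.mono inter_subset_left)
  obtain ⟨K, hK, hKf⟩ := hcompact
  exact hKf ▸ MeasurableSet.iUnion fun n => (hK n).measurableSet

end CriticalPoints

section Straightening

theorem exists_openPartialHomeomorph_contDiffOn_symm [CompleteSpace E] {Φ : E → F} {U : Set E}
    {x₀ : E} {n : WithTop ℕ∞} {Φ' : E ≃L[ℝ] F} (hU : IsOpen U) (hΦ : ContDiffOn ℝ n Φ U)
    (hn : n ≠ 0) (hx₀ : x₀ ∈ U) (hΦ' : HasFDerivAt Φ (Φ' : E →L[ℝ] F) x₀) :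
    ∃ ψ : OpenPartialHomeomorph E F, x₀ ∈ ψ.source ∧ ψ.source ⊆ U ∧ ⇑ψ = Φ ∧
      ContDiffOn ℝ n ψ.symm ψ.target := by
  have hsmooth : ∀ x ∈ U, ContDiffAt ℝ n Φ x := fun x hx => hΦ.contDiffAt (hU.mem_nhds hx)
  let ψ := (hsmooth x₀ hx₀).toOpenPartialHomeomorph Φ hΦ' hn
  let W := U ∩ fderiv ℝ Φ ⁻¹' range ((↑) : (E ≃L[ℝ] F) → E →L[ℝ] F)
  have hW : IsOpen W := (hΦ.continuousOn_fderiv_of_isOpen hU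
    (ENat.one_le_iff_ne_zero_withTop.2 hn)).isOpen_inter_preimage hU ContinuousLinearEquiv.isOpen
  have hsource : (ψ.restrOpen W hW).source = ψ.source ∩ W := ψ.restrOpen_source W hW
  refine ⟨ψ.restrOpen W hW, ?_, ?_, rfl, fun y hy => ?_⟩
  · exact hsource ▸ ⟨(hsmooth x₀ hx₀).mem_toOpenPartialHomeomorph_source hΦ' hn, hx₀,
      Φ', hΦ'.fderiv.symm⟩
  · exact hsource ▸ fun x hx => hx.2.1
  · obtain ⟨-, hyU, e, he⟩ := hsource ▸ (ψ.restrOpen W hW).map_target hy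
    refine (OpenPartialHomeomorph.contDiffAt_symm (f₀' := e) _ hy ?_
      (hsmooth _ hyU)).contDiffWithinAt
    rw [he]
    exact ((hsmooth _ hyU).differentiableAt hn).hasFDerivAt

theorem exists_openPartialHomeomorph_fst_eq [CompleteSpace E] [FiniteDimensional ℝ B] {h : E → B}
    {U : Set E} {x₀ : E} {n : WithTop ℕ∞} (hU : IsOpen U) (hh : ContDiffOn ℝ n h U) (hn : n ≠ 0)
    (hx₀ : x₀ ∈ U) (hsurj : Function.Surjective (fderiv ℝ h x₀)) :
    ∃ ψ : OpenPartialHomeomorph E (B × (fderiv ℝ h x₀).ker), x₀ ∈ ψ.source ∧ ψ.source ⊆ U ∧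
      (∀ x, (ψ x).1 = h x) ∧ ContDiffOn ℝ n ψ.symm ψ.target := by
  obtain ⟨R, hR⟩ := (fderiv ℝ h x₀).exists_rightInverse_of_surjective
    (LinearMap.range_eq_top.2 hsurj)
  have hR' : Function.RightInverse R (fderiv ℝ h x₀) := DFunLike.congr_fun hR
  let π := (fderiv ℝ h x₀).projKerOfRightInverse R hR'
  have hderiv : HasFDerivAt (fun x => (h x, π x))
      (ContinuousLinearEquiv.equivOfRightInverse _ R hR' : E →L[ℝ] _) x₀ :=
    ((hh.contDiffAt (hU.mem_nhds hx₀)).differentiableAt hn).hasFDerivAt.prodMk π.hasFDerivAt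
  obtain ⟨ψ, hxψ, hψU, hψ, hsymm⟩ := exists_openPartialHomeomorph_contDiffOn_symm hU
    (hh.prodMk π.contDiff.contDiffOn) hn hx₀ hderiv
  exact ⟨ψ, hxψ, hψU, fun x => by rw [hψ], hsymm⟩

end Straightening

section FlatPoints

/-- The points at which the derivatives of `f` of orders `1, …, k` vanish. On the set of these
points a `C^(k + 1)` map is locally Hölder continuous of exponent `k + 1`. -/
def flatPoints (k : ℕ) (f : E → F) : Set E :=
  {x | ∀ j, 1 ≤ j → j ≤ k → iteratedFDeriv ℝ j f x = 0}

theorem exists_iteratedFDeriv_eq_zero_of_notMem_flatPoints {f : E → F} {x : E} {k : ℕ}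
    (hx : fderiv ℝ f x = 0) (hxk : x ∉ flatPoints k f) :
    ∃ i, iteratedFDeriv ℝ i f x = 0 ∧ fderiv ℝ (iteratedFDeriv ℝ i f) x ≠ 0 := by
  by_contra! hvanish
  refine hxk fun j hj _ => ?_
  induction j, hj using Nat.le_induction with
  | base => rw [← norm_eq_zero, norm_iteratedFDeriv_one, hx, norm_zero]
  | succ i _ ih =>
    have hi : iteratedFDeriv ℝ i f x = 0 := ih (by lia)
    rw [← norm_eq_zero, ← norm_fderiv_iteratedFDeriv, hvanish i hi]
    exact norm_zero (E := E →L[ℝ] E [×i]→L[ℝ] F)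

/-- Taylor's formula with remainder, by descending induction on the order `j` of the derivative:
the estimate for `iteratedFDeriv ℝ (j + 1) f` bounds the derivative of `iteratedFDeriv ℝ j f`. -/
theorem norm_iteratedFDeriv_sub_le_of_mem_flatPoints {f : E → F} {s : Set E} {x y : E} {M : ℝ}
    {j d : ℕ} (hs : Convex ℝ s) (hf : ∀ z ∈ s, ContDiffAt ℝ (j + d + 1 : ℕ) f z)
    (hM : ∀ z ∈ s, ‖iteratedFDeriv ℝ (j + d + 1) f z‖ ≤ M) (hx : x ∈ s)
    (hflat : x ∈ flatPoints (j + d) f) (hy : y ∈ s) :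
    ‖iteratedFDeriv ℝ j f y - iteratedFDeriv ℝ j f x‖ ≤ M * ‖y - x‖ ^ (d + 1) := by
  have hM₀ : 0 ≤ M := (norm_nonneg _).trans (hM x hx)
  have hdiff : ∀ z ∈ s, DifferentiableAt ℝ (iteratedFDeriv ℝ j f) z := fun z hz =>
    (hf z hz).differentiableAt_iteratedFDeriv (by norm_cast; lia)
  induction d generalizing j y with
  | zero =>
    rw [zero_add, pow_one]
    refine hs.norm_image_sub_le_of_norm_fderiv_le hdiff (fun z hz => ?_) hx hy
    rw [norm_fderiv_iteratedFDeriv]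
    exact hM z hz
  | succ d ih =>
    have hseg : segment ℝ x y ⊆ s := hs.segment_subset hx hy
    have hidx : j + 1 + d = j + (d + 1) := by lia
    have hbound : ∀ z ∈ segment ℝ x y,
        ‖fderiv ℝ (iteratedFDeriv ℝ j f) z‖ ≤ M * ‖y - x‖ ^ (d + 1) := fun z hz => calc
      ‖fderiv ℝ (iteratedFDeriv ℝ j f) z‖
          = ‖iteratedFDeriv ℝ (j + 1) f z - iteratedFDeriv ℝ (j + 1) f x‖ := by
        rw [norm_fderiv_iteratedFDeriv, hflat (j + 1) (by lia) (by lia), sub_zero]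
      _ ≤ M * ‖z - x‖ ^ (d + 1) := by
        refine ih (by rwa [hidx]) (by rwa [hidx]) (by rwa [hidx]) (hseg hz) fun w hw => ?_
        exact (hf w hw).differentiableAt_iteratedFDeriv (by norm_cast; lia)
      _ ≤ M * ‖y - x‖ ^ (d + 1) := by
        gcongr
        exact norm_sub_le_of_mem_segment hz
    calc ‖iteratedFDeriv ℝ j f y - iteratedFDeriv ℝ j f x‖
        ≤ M * ‖y - x‖ ^ (d + 1) * ‖y - x‖ :=
          (convex_segment x y).norm_image_sub_le_of_norm_fderiv_le (fun z hz => hdiff z (hseg hz))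
            hbound (left_mem_segment ℝ x y) (right_mem_segment ℝ x y)
      _ = M * ‖y - x‖ ^ (d + 1 + 1) := by rw [mul_assoc, ← pow_succ]

theorem norm_sub_le_of_mem_flatPoints {f : E → F} {s : Set E} {x y : E} {M : ℝ} {k : ℕ}
    (hs : Convex ℝ s) (hf : ∀ z ∈ s, ContDiffAt ℝ (k + 1 : ℕ) f z)
    (hM : ∀ z ∈ s, ‖iteratedFDeriv ℝ (k + 1) f z‖ ≤ M) (hx : x ∈ s) (hflat : x ∈ flatPoints k f)
    (hy : y ∈ s) : ‖f y - f x‖ ≤ M * ‖y - x‖ ^ (k + 1) := by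
  have htaylor : ‖iteratedFDeriv ℝ 0 f y - iteratedFDeriv ℝ 0 f x‖ ≤ M * ‖y - x‖ ^ (k + 1) :=
    norm_iteratedFDeriv_sub_le_of_mem_flatPoints hs (by rwa [zero_add]) (by rwa [zero_add]) hx
      (by rwa [zero_add]) hy
  simpa only [iteratedFDeriv_zero_eq_comp, Function.comp_apply, ← map_sub,
    LinearIsometryEquiv.norm_map] using htaylor

theorem exists_holderOnWith_inter_flatPoints [FiniteDimensional ℝ E] {f : E → F} {U : Set E}
    {x : E} {k : ℕ} (hU : IsOpen U) (hf : ContDiffOn ℝ (k + 1 : ℕ) f U) (hx : x ∈ U) :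
    ∃ C : ℝ≥0, ∃ t ∈ 𝓝 x, HolderOnWith C (k + 1 : ℕ) f (t ∩ flatPoints k f) := by
  obtain ⟨r, hr, hrU⟩ := Metric.nhds_basis_closedBall.mem_iff.1 (hU.mem_nhds hx)
  have hsmooth : ∀ z ∈ Metric.closedBall x r, ContDiffAt ℝ (k + 1 : ℕ) f z := fun z hz =>
    hf.contDiffAt (hU.mem_nhds (hrU hz))
  obtain ⟨M, hM⟩ := (isCompact_closedBall x r).exists_bound_of_continuousOn fun z hz =>
    ((hsmooth z hz).continuousAt_iteratedFDeriv le_rfl).continuousWithinAt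
  refine ⟨M.toNNReal, Metric.closedBall x r, Metric.closedBall_mem_nhds x hr, ?_⟩
  rintro y ⟨hy, -⟩ z ⟨hz, hzflat⟩
  rw [NNReal.coe_natCast, ENNReal.rpow_natCast, edist_dist, edist_dist, dist_eq_norm, dist_eq_norm,
    ← ENNReal.ofReal_pow (norm_nonneg _), ← ENNReal.ofReal, ← ENNReal.ofReal_mul' (by positivity)]
  exact ENNReal.ofReal_le_ofReal
    (norm_sub_le_of_mem_flatPoints (convex_closedBall x r) hsmooth hM hz hzflat hy)

theorem dimH_image_flatPoints_le [FiniteDimensional ℝ E] {f : E → F} {U : Set E} {k : ℕ}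
    (hU : IsOpen U) (hf : ContDiffOn ℝ (k + 1 : ℕ) f U) :
    dimH (f '' (U ∩ flatPoints k f)) ≤ finrank ℝ E / (k + 1 : ℕ) := by
  have hholder : ∀ x ∈ U ∩ flatPoints k f, ∃ C : ℝ≥0, ∃ t ∈ 𝓝[U ∩ flatPoints k f] x,
      HolderOnWith C (k + 1 : ℕ) f t := by
    rintro x ⟨hxU, -⟩
    obtain ⟨C, t, ht, hCt⟩ := exists_holderOnWith_inter_flatPoints hU hf hxU
    exact ⟨C, t ∩ flatPoints k f, inter_mem (mem_nhdsWithin_of_mem_nhds ht)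
      (mem_of_superset self_mem_nhdsWithin inter_subset_right), hCt⟩
  calc dimH (f '' (U ∩ flatPoints k f))
      ≤ dimH (U ∩ flatPoints k f) / ((k + 1 : ℕ) : ℝ≥0) :=
        dimH_image_le_of_locally_holder_on (by positivity) hholder
    _ ≤ finrank ℝ E / (k + 1 : ℕ) := by
        rw [← Real.dimH_univ_eq_finrank E, ENNReal.coe_natCast]
        gcongr
        exact subset_univ _

theorem addHaar_image_flatPoints_finrank [FiniteDimensional ℝ E] [FiniteDimensional ℝ F]
    [Nontrivial F] [MeasurableSpace F] [BorelSpace F] (μ : Measure F) [μ.IsAddHaarMeasure]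
    {f : E → F} {U : Set E} (hU : IsOpen U) (hf : ContDiffOn ℝ (finrank ℝ E + 1 : ℕ) f U) :
    μ (f '' (U ∩ flatPoints (finrank ℝ E) f)) = 0 := by
  have hdim : dimH (f '' (U ∩ flatPoints (finrank ℝ E) f)) < ((finrank ℝ F : ℝ≥0) : ℝ≥0∞) := calc
    dimH (f '' (U ∩ flatPoints (finrank ℝ E) f)) ≤ finrank ℝ E / (finrank ℝ E + 1 : ℕ) :=
      dimH_image_flatPoints_le hU hf
    _ < 1 := by
      rw [ENNReal.div_lt_iff (by simp) (by simp), one_mul]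
      exact_mod_cast Nat.lt_succ_self _
    _ ≤ ((finrank ℝ F : ℝ≥0) : ℝ≥0∞) := by exact_mod_cast finrank_pos (R := ℝ) (M := F)
  exact Measure.absolutelyContinuous_isAddHaarMeasure μ (Measure.hausdorffMeasure (finrank ℝ F))
    (by simpa using hausdorffMeasure_of_dimH_lt hdim)

end FlatPoints

section NullSets

theorem measure_image_null_of_locally_null {X Y : Type*} [TopologicalSpace X]
    [SecondCountableTopology X] [MeasurableSpace Y] {μ : Measure Y} {f : X → Y} {s : Set X}
    (h : ∀ x ∈ s, ∃ u ∈ 𝓝 x, μ (f '' (s ∩ u)) = 0) : μ (f '' s) = 0 := by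
  refine measure_null_of_locally_null (μ := OuterMeasure.comap f μ.toOuterMeasure) s fun x hx => ?_
  obtain ⟨u, hu, hnull⟩ := h x hx
  exact ⟨s ∩ u, inter_mem_nhdsWithin s hu, hnull⟩

theorem addHaar_prod_null_of_slice_null [FiniteDimensional ℝ B] [FiniteDimensional ℝ G]
    [MeasurableSpace B] [BorelSpace B] [MeasurableSpace G] [BorelSpace G] (μ : Measure (B × G))
    [μ.IsAddHaarMeasure] (ν : Measure G) [ν.IsAddHaarMeasure] {s : Set (B × G)}
    (hs : MeasurableSet s) (hslice : ∀ b, ν (Prod.mk b ⁻¹' s) = 0) : μ s = 0 :=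
  Measure.absolutelyContinuous_isAddHaarMeasure μ (Measure.addHaar.prod ν)
    ((Measure.measure_prod_null hs).2 (Eventually.of_forall hslice))

end NullSets

section MorseSard

/-- The conclusion of the Morse–Sard theorem for smooth maps from open subsets of `E` to `F`, with
`F` carrying an arbitrary Haar measure. This is the statement on which the induction runs. -/
def MorseSardProperty (E F : Type*) [NormedAddCommGroup E] [NormedSpace ℝ E]
    [NormedAddCommGroup F] [NormedSpace ℝ F] [MeasurableSpace F] : Prop :=
  ∀ (μ : Measure F) [μ.IsAddHaarMeasure] (f : E → F) (U : Set E), IsOpen U → ContDiffOn ℝ ∞ f U →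
    μ (f '' (U ∩ criticalPoints f)) = 0

theorem surjective_of_surjective_snd_comp_inr {D : B × E →L[ℝ] B × G}
    (hfst : ∀ p, (D p).1 = p.1) (hsurj : Function.Surjective fun v => (D (0, v)).2) :
    Function.Surjective D := by
  rintro ⟨b, z⟩
  obtain ⟨v, hv⟩ := hsurj (z - (D (b, 0)).2)
  have hv' : (D (0, v)).2 = z - (D (b, 0)).2 := hv
  refine ⟨(b, v), Prod.ext (hfst _) ?_⟩
  calc (D (b, v)).2 = (D (b, 0)).2 + (D (0, v)).2 := by simp [← Prod.snd_add, ← map_add]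
    _ = z := by rw [hv', add_sub_cancel]

theorem snd_mem_criticalPoints_of_fst_eventuallyEq {g : B × E → B × G} {p : B × E}
    (hg : DifferentiableAt ℝ g p) (hfst : ∀ᶠ q in 𝓝 p, (g q).1 = q.1)
    (hp : p ∈ criticalPoints g) : p.2 ∈ criticalPoints fun v => (g (p.1, v)).2 := by
  have hderiv_fst : ∀ q, (fderiv ℝ g p q).1 = q.1 := DFunLike.congr_fun <|
    hg.hasFDerivAt.fst.unique (hasFDerivAt_fst.congr_of_eventuallyEq hfst)
  have hderiv_slice : HasFDerivAt (fun v => (g (p.1, v)).2)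
      ((ContinuousLinearMap.snd ℝ B G ∘L fderiv ℝ g p) ∘L ContinuousLinearMap.inr ℝ B E) p.2 :=
    HasFDerivAt.comp (g := fun q => (g q).2) p.2 hg.hasFDerivAt.snd
      (hasFDerivAt_prodMk_right p.1 p.2)
  intro hsurj
  rw [hderiv_slice.fderiv] at hsurj
  exact hp (surjective_of_surjective_snd_comp_inr hderiv_fst hsurj)

theorem MorseSardProperty.addHaar_image_criticalPoints_of_fst_eq [FiniteDimensional ℝ E]
    [FiniteDimensional ℝ B] [FiniteDimensional ℝ G] [MeasurableSpace B] [BorelSpace B]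
    [MeasurableSpace G] [BorelSpace G] (hEG : MorseSardProperty E G) (μ : Measure (B × G))
    [μ.IsAddHaarMeasure] {g : B × E → B × G} {V : Set (B × E)} (hV : IsOpen V)
    (hg : ContDiffOn ℝ ∞ g V) (hfst : ∀ p ∈ V, (g p).1 = p.1) :
    μ (g '' (V ∩ criticalPoints g)) = 0 := by
  refine addHaar_prod_null_of_slice_null μ Measure.addHaar
    (measurableSet_image_criticalPoints hV (hg.of_le (by simp))) fun b => ?_
  have hslice : ContDiffOn ℝ ∞ (fun v => (g (b, v)).2) (Prod.mk b ⁻¹' V) :=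
    hg.snd.comp (contDiff_prodMk_right b).contDiffOn fun v hv => hv
  refine measure_mono_null ?_ (hEG Measure.addHaar _ _ (hV.preimage (by fun_prop)) hslice)
  rintro z ⟨⟨b', v⟩, ⟨hpV, hpcrit⟩, hgz⟩
  obtain rfl : b' = b := (hfst _ hpV).symm.trans (congrArg Prod.fst hgz)
  refine ⟨v, ⟨hpV, snd_mem_criticalPoints_of_fst_eventuallyEq ?_ ?_ hpcrit⟩, by simp only [hgz]⟩
  · exact (hg.contDiffAt (hV.mem_nhds hpV)).differentiableAt (by simp)
  · exact mem_of_superset (hV.mem_nhds hpV) hfst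

section Charts

variable {K : Type*} [NormedAddCommGroup K] [NormedSpace ℝ K] [MeasurableSpace F] (μ : Measure F)
  [μ.IsAddHaarMeasure] {f : E → F} {ψ : OpenPartialHomeomorph E (B × K)}

theorem MorseSardProperty.addHaar_image_criticalPoints_of_chart [FiniteDimensional ℝ K]
    [FiniteDimensional ℝ B] [FiniteDimensional ℝ G] [BorelSpace F] [MeasurableSpace B]
    [BorelSpace B] [MeasurableSpace G] [BorelSpace G] (hKG : MorseSardProperty K G)
    (hf : ContDiffOn ℝ ∞ f ψ.source) (hψ : ContDiffOn ℝ ∞ ψ.symm ψ.target) (e : F ≃L[ℝ] B × G)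
    (hfst : ∀ x ∈ ψ.source, (e (f x)).1 = (ψ x).1) :
    μ (f '' (ψ.source ∩ criticalPoints f)) = 0 := by
  let g : B × K → B × G := e ∘ f ∘ ψ.symm
  have hfψ : ContDiffOn ℝ ∞ (f ∘ ψ.symm) ψ.target := hf.comp hψ ψ.mapsTo_symm
  have hgfst : ∀ p ∈ ψ.target, (g p).1 = p.1 := fun p hp => by
    rw [← congrArg Prod.fst (ψ.right_inv hp), ← hfst _ (ψ.map_target hp)]
    rfl
  have hnull : μ.map e (g '' (ψ.target ∩ criticalPoints g)) = 0 :=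
    have := e.isAddHaarMeasure_map μ
    hKG.addHaar_image_criticalPoints_of_fst_eq _ ψ.open_target (e.contDiff.comp_contDiffOn hfψ)
      hgfst
  refine measure_mono_null ?_
    (Measure.preimage_null_of_map_null e.continuous.measurable.aemeasurable hnull)
  rintro _ ⟨x, ⟨hx, hxcrit⟩, rfl⟩
  refine ⟨ψ x, ⟨ψ.map_source hx, ?_⟩, by simp only [g, Function.comp_apply, ψ.left_inv hx]⟩
  rw [criticalPoints_continuousLinearEquiv_comp]
  refine mem_criticalPoints_comp ?_ ?_ (by rwa [ψ.left_inv hx])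
  · rw [ψ.left_inv hx]
    exact (hf.contDiffAt (ψ.open_source.mem_nhds hx)).differentiableAt (by simp)
  · exact (hψ.contDiffAt (ψ.open_target.mem_nhds (ψ.map_source hx))).differentiableAt (by simp)

theorem MorseSardProperty.addHaar_image_criticalPoints_inter_slice (hKF : MorseSardProperty K F)
    (hf : ContDiffOn ℝ ∞ f ψ.source) (hψ : ContDiffOn ℝ ∞ ψ.symm ψ.target) (b : B) :
    μ (f '' {x ∈ ψ.source ∩ criticalPoints f | (ψ x).1 = b}) = 0 := by
  let W : Set K := Prod.mk b ⁻¹' ψ.target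
  have hW : IsOpen W := ψ.open_target.preimage (by fun_prop)
  have hparam : ContDiffOn ℝ ∞ (fun v => ψ.symm (b, v)) W :=
    hψ.comp (contDiff_prodMk_right b).contDiffOn fun v hv => hv
  refine measure_mono_null ?_ (hKF μ _ W hW (hf.comp hparam fun v hv => ψ.map_target hv))
  rintro _ ⟨x, ⟨⟨hx, hxcrit⟩, rfl⟩, rfl⟩
  have hv : (ψ x).2 ∈ W := ψ.map_source hx
  have hxv : ψ.symm ((ψ x).1, (ψ x).2) = x := ψ.left_inv hx
  refine ⟨(ψ x).2, ⟨hv, mem_criticalPoints_comp ?_ ?_ (by rwa [hxv])⟩, congrArg f hxv⟩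
  · rw [hxv]
    exact (hf.contDiffAt (ψ.open_source.mem_nhds hx)).differentiableAt (by simp)
  · exact (hparam.contDiffAt (hW.mem_nhds hv)).differentiableAt (by simp)

end Charts

theorem exists_fderiv_continuousLinearMap_comp_ne_zero {w : E → G} {x : E}
    (hw : fderiv ℝ w x ≠ 0) : ∃ χ : G →L[ℝ] ℝ, fderiv ℝ (χ ∘ w) x ≠ 0 := by
  obtain ⟨v, hv⟩ := DFunLike.ne_iff.1 hw
  obtain ⟨χ, hχ⟩ := SeparatingDual.exists_ne_zero (R := ℝ) hv
  have hdiff : DifferentiableAt ℝ w x :=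
    by_contra fun h => hw (fderiv_zero_of_not_differentiableAt h)
  refine ⟨χ, fun h => hχ ?_⟩
  rw [(χ.hasFDerivAt.comp x hdiff.hasFDerivAt).fderiv] at h
  exact DFunLike.congr_fun h v

theorem surjective_of_continuousLinearMap_ne_zero {φ : E →L[ℝ] ℝ} (hφ : φ ≠ 0) :
    Function.Surjective φ :=
  LinearMap.surjective_of_ne_zero (f := (φ : E →ₗ[ℝ] ℝ)) (by exact_mod_cast hφ)

theorem subset_fderiv_ne_zero_union_flatPoints (s : Set E) (f : E → F) (k : ℕ) :
    s ⊆ {x ∈ s | fderiv ℝ f x ≠ 0} ∪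
      (⋃ i, {x ∈ s | iteratedFDeriv ℝ i f x = 0 ∧ fderiv ℝ (iteratedFDeriv ℝ i f) x ≠ 0}) ∪
      s ∩ flatPoints k f := by
  intro x hx
  by_cases hfx : fderiv ℝ f x = 0
  · by_cases hflat : x ∈ flatPoints k f
    · exact Or.inr ⟨hx, hflat⟩
    · obtain ⟨i, hi⟩ := exists_iteratedFDeriv_eq_zero_of_notMem_flatPoints hfx hflat
      exact Or.inl (Or.inr (mem_iUnion.2 ⟨i, hx, hi⟩))
  · exact Or.inl (Or.inl ⟨hx, hfx⟩)

section InductionStep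

variable [FiniteDimensional ℝ E] [MeasurableSpace F]

theorem addHaar_image_criticalPoints_of_fderiv_ne_zero [FiniteDimensional ℝ F] [BorelSpace F]
    (μ : Measure F) [μ.IsAddHaarMeasure] {f : E → F} {U : Set E}
    (hker : ∀ (φ : E →L[ℝ] ℝ) (χ : F →L[ℝ] ℝ), φ ≠ 0 → MorseSardProperty φ.ker χ.ker)
    (hU : IsOpen U) (hf : ContDiffOn ℝ ∞ f U) :
    μ (f '' {x ∈ U ∩ criticalPoints f | fderiv ℝ f x ≠ 0}) = 0 := by
  refine measure_image_null_of_locally_null ?_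
  rintro x₀ ⟨⟨hx₀, -⟩, hne⟩
  obtain ⟨χ, hχf⟩ := exists_fderiv_continuousLinearMap_comp_ne_zero hne
  have hχ : χ ≠ 0 := by
    rintro rfl
    exact hχf (by simp)
  obtain ⟨ψ, hxψ, hψU, hψ, hsymm⟩ := exists_openPartialHomeomorph_fst_eq hU
    (χ.contDiff.comp_contDiffOn hf) (by simp) hx₀
    (surjective_of_continuousLinearMap_ne_zero hχf)
  obtain ⟨R, hR⟩ := χ.exists_rightInverse_of_surjective
    (LinearMap.range_eq_top.2 (surjective_of_continuousLinearMap_ne_zero hχ))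
  let e := ContinuousLinearEquiv.equivOfRightInverse χ R (DFunLike.congr_fun hR)
  refine ⟨ψ.source, ψ.open_source.mem_nhds hxψ, measure_mono_null (image_mono ?_)
    ((hker _ χ hχf).addHaar_image_criticalPoints_of_chart μ (hf.mono hψU) hsymm e
      fun x _ => (hψ x).symm)⟩
  exact fun x hx => ⟨hx.2, hx.1.1.2⟩

theorem addHaar_image_criticalPoints_of_eq_zero_of_fderiv_ne_zero
    (μ : Measure F) [μ.IsAddHaarMeasure] {f : E → F} {w : E → G} {U : Set E}
    (hker : ∀ φ : E →L[ℝ] ℝ, φ ≠ 0 → MorseSardProperty φ.ker F) (hU : IsOpen U)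
    (hf : ContDiffOn ℝ ∞ f U) (hw : ContDiffOn ℝ ∞ w U) :
    μ (f '' {x ∈ U ∩ criticalPoints f | w x = 0 ∧ fderiv ℝ w x ≠ 0}) = 0 := by
  refine measure_image_null_of_locally_null ?_
  rintro x₀ ⟨⟨hx₀, -⟩, -, hne⟩
  obtain ⟨χ, hχw⟩ := exists_fderiv_continuousLinearMap_comp_ne_zero hne
  obtain ⟨ψ, hxψ, hψU, hψ, hsymm⟩ := exists_openPartialHomeomorph_fst_eq hU
    (χ.contDiff.comp_contDiffOn hw) (by simp) hx₀
    (surjective_of_continuousLinearMap_ne_zero hχw)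
  refine ⟨ψ.source, ψ.open_source.mem_nhds hxψ, measure_mono_null (image_mono ?_)
    ((hker _ hχw).addHaar_image_criticalPoints_inter_slice μ (hf.mono hψU) hsymm 0)⟩
  rintro x ⟨⟨⟨-, hxcrit⟩, hwx, -⟩, hx⟩
  exact ⟨⟨hx, hxcrit⟩, by rw [hψ, Function.comp_apply, hwx, map_zero]⟩

theorem morseSardProperty_of_ker [FiniteDimensional ℝ F] [BorelSpace F]
    (hker : ∀ (φ : E →L[ℝ] ℝ) (χ : F →L[ℝ] ℝ), φ ≠ 0 → MorseSardProperty φ.ker χ.ker)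
    (hkerF : ∀ φ : E →L[ℝ] ℝ, φ ≠ 0 → MorseSardProperty φ.ker F) : MorseSardProperty E F := by
  intro μ _ f U hU hf
  rcases subsingleton_or_nontrivial F with _ | _
  · rw [criticalPoints_eq_empty_of_subsingleton, inter_empty, image_empty, measure_empty]
  have hiter : ∀ i, ContDiffOn ℝ ∞ (iteratedFDeriv ℝ i f) U := fun i x hx =>
    ((hf.contDiffAt (hU.mem_nhds hx)).iteratedFDeriv_right le_rfl).contDiffWithinAt
  refine measure_mono_null
    (image_mono (subset_fderiv_ne_zero_union_flatPoints _ f (finrank ℝ E))) ?_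
  rw [image_union, image_union, image_iUnion, measure_union_null_iff, measure_union_null_iff,
    measure_iUnion_null_iff]
  exact ⟨⟨addHaar_image_criticalPoints_of_fderiv_ne_zero μ hker hU hf, fun i =>
    addHaar_image_criticalPoints_of_eq_zero_of_fderiv_ne_zero μ hkerF hU hf (hiter i)⟩,
    measure_mono_null (image_mono (inter_subset_inter_left _ inter_subset_left))
      (addHaar_image_flatPoints_finrank μ hU (hf.of_le (by exact_mod_cast le_top)))⟩

end InductionStep

theorem finrank_ker_lt_of_ne_zero [FiniteDimensional ℝ E] {φ : E →L[ℝ] ℝ} (hφ : φ ≠ 0) :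
    finrank ℝ φ.ker < finrank ℝ E :=
  Submodule.finrank_lt fun h => hφ <| ContinuousLinearMap.coe_injective <| LinearMap.ker_eq_top.1 h

theorem morseSardProperty (E : Type*) (F : Type*) [NormedAddCommGroup E] [NormedSpace ℝ E]
    [FiniteDimensional ℝ E] [NormedAddCommGroup F] [NormedSpace ℝ F] [FiniteDimensional ℝ F]
    [MeasurableSpace F] [BorelSpace F] : MorseSardProperty E F := by
  induction hd : finrank ℝ E using Nat.strong_induction_on generalizing E F with
  | h d ih =>
    subst hd
    exact morseSardProperty_of_ker
      (fun φ χ hφ => ih _ (finrank_ker_lt_of_ne_zero hφ) φ.ker χ.ker rfl)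
      (fun φ hφ => ih _ (finrank_ker_lt_of_ne_zero hφ) φ.ker F rfl)

end MorseSard

theorem stmt_0_general [FiniteDimensional ℝ E] [FiniteDimensional ℝ F] [MeasurableSpace F]
    [BorelSpace F] (μ : Measure F) [μ.IsAddHaarMeasure] {f : E → F} {U : Set E} (hU : IsOpen U)
    (hf : ContDiffOn ℝ ∞ f U) :
    μ {y | ∃ x ∈ U, f x = y ∧ ¬ Function.Surjective (fderiv ℝ f x)} = 0 := by
  refine measure_mono_null ?_ (morseSardProperty E F μ f U hU hf)
  rintro y ⟨x, hx, hxy, hcrit⟩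
  exact ⟨x, ⟨hx, hcrit⟩, hxy⟩

/-- **Morse–Sard theorem.** For a `C^∞` map `f : ℝ^m → ℝ^n` (with `m, n` positive),
the set of critical values of `f`, i.e. the set of `y` such that `y = f x` for some
point `x` at which the Fréchet derivative of `f` is not surjective, has Lebesgue
measure zero in `ℝ^n`. -/
theorem stmt_0 (m n : ℕ) (hm : 0 < m) (hn : 0 < n)
    (f : (Fin m → ℝ) → (Fin n → ℝ)) (hf : ContDiff ℝ ∞ f) :
    volume {y : Fin n → ℝ | ∃ x : Fin m → ℝ,
      f x = y ∧ ¬ Function.Surjective (fderiv ℝ f x)} = 0 := by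
  simpa only [mem_univ, true_and] using stmt_0_general volume isOpen_univ hf.contDiffOn
end

section
/- Let Φ : B(α₀, R) ⊆ ℝ^n → ℝ^N be a C²-function such that the Fréchet derivative DΦ(α₀) : ℝ^n → ℝ^N is injective. Then there exist constants r, β, γ > 0 with r ≤ R such that (1) ⟨DΦ(α₀)ᵀ DΦ(α₀) v, v⟩ ≥ β‖v‖² for all v ∈ ℝ^n, and (2) ‖D²Φ(α)‖ ≤ γ for all α ∈ B(α₀, r); consequently, with r_{β,γ} = min{ r, √β/(6γ) }, the restriction of Φ to B(α₀, r_{β,γ}) is injective, so there is a map Φ⁻¹ : Φ(B(α₀, r_{β,γ})) → B(α₀, r_{β,γ}) with Φ⁻¹(Φ(α)) = α for every α ∈ B(α₀, r_{β,γ}). -/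
open Metric
open scoped RealInnerProductSpace

/-!
A bound `γ` on `D²Φ` makes `DΦ` a `γ`-Lipschitz map, so on a ball of radius `ρ` it stays within
`γ ρ` of `A = DΦ(α₀)`. If `c ‖v‖ ≤ ‖A v‖` and `γ ρ < c`, then the mean value inequality applied to
`Φ - A` shows that `Φ` separates the points of this ball. Coercivity of `Aᵀ A` with constant `β`
says that one may take `c = √β`, and the radius `√β / (6 γ)` leaves a factor `6` to spare.
-/

section Calculus

variable {𝕜 E F : Type*} [RCLike 𝕜] [NormedAddCommGroup E] [NormedSpace ℝ E] [NormedSpace 𝕜 E]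
  [NormedAddCommGroup F] [NormedSpace 𝕜 F] {f : E → F} {s : Set E}

theorem norm_fderiv_sub_le_of_norm_iteratedFDeriv_two_le {γ : ℝ} {x y : E} (hs : Convex ℝ s)
    (hf : ∀ z ∈ s, ContDiffAt 𝕜 2 f z) (hγ : ∀ z ∈ s, ‖iteratedFDeriv 𝕜 2 f z‖ ≤ γ)
    (hx : x ∈ s) (hy : y ∈ s) :
    ‖fderiv 𝕜 f y - fderiv 𝕜 f x‖ ≤ γ * ‖y - x‖ := by
  have hdiff : ∀ z ∈ s, DifferentiableAt 𝕜 (fderiv 𝕜 f) z := fun z hz =>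
    ((hf z hz).fderiv_right (m := 1) one_add_one_eq_two.le).differentiableAt one_ne_zero
  refine hs.norm_image_sub_le_of_norm_fderiv_le hdiff (fun z hz => ?_) hx hy
  rw [← norm_iteratedFDeriv_one, norm_iteratedFDeriv_fderiv]
  exact hγ z hz

theorem injOn_of_norm_fderiv_sub_le {A : E →L[𝕜] F} {c C : ℝ} (hs : Convex ℝ s)
    (hf : ∀ x ∈ s, DifferentiableAt 𝕜 f x) (hA : ∀ v, c * ‖v‖ ≤ ‖A v‖)
    (hC : ∀ x ∈ s, ‖fderiv 𝕜 f x - A‖ ≤ C) (hCc : C < c) : Set.InjOn f s := by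
  intro x hx y hy hxy
  have hmean : ‖A (y - x)‖ ≤ C * ‖y - x‖ := by
    simpa only [hxy, sub_self, zero_sub, norm_neg] using
      hs.norm_image_sub_le_of_norm_fderiv_le' hf hC hx hy
  have hzero : ‖y - x‖ = 0 := by
    nlinarith [hA (y - x), norm_nonneg (y - x)]
  exact (norm_sub_eq_zero_iff.mp hzero).symm

theorem injOn_ball_of_norm_iteratedFDeriv_two_le {x₀ : E} {c γ ρ : ℝ}
    (hf : ∀ x ∈ ball x₀ ρ, ContDiffAt 𝕜 2 f x) (hc : ∀ v, c * ‖v‖ ≤ ‖fderiv 𝕜 f x₀ v‖)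
    (hγ : ∀ x ∈ ball x₀ ρ, ‖iteratedFDeriv 𝕜 2 f x‖ ≤ γ) (hρ : γ * ρ < c) :
    Set.InjOn f (ball x₀ ρ) := by
  have hclose : ∀ x ∈ ball x₀ ρ, ‖fderiv 𝕜 f x - fderiv 𝕜 f x₀‖ ≤ γ * ρ := fun x hx => by
    have hγ₀ : 0 ≤ γ := (norm_nonneg _).trans (hγ x hx)
    calc ‖fderiv 𝕜 f x - fderiv 𝕜 f x₀‖
        ≤ γ * ‖x - x₀‖ := norm_fderiv_sub_le_of_norm_iteratedFDeriv_two_le (convex_ball x₀ ρ)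
          hf hγ (mem_ball_self (pos_of_mem_ball hx)) hx
      _ ≤ γ * ρ := by gcongr; exact (mem_ball_iff_norm.mp hx).le
  exact injOn_of_norm_fderiv_sub_le (convex_ball x₀ ρ)
    (fun x hx => (hf x hx).differentiableAt two_ne_zero) hc hclose hρ

end Calculus

theorem exists_norm_le_on_ball_of_continuousAt {X G : Type*} [PseudoMetricSpace X]
    [SeminormedAddCommGroup G] {g : X → G} {x₀ : X} {R : ℝ} (hR : 0 < R)
    (hg : ContinuousAt g x₀) :
    ∃ r C : ℝ, 0 < r ∧ r ≤ R ∧ 0 < C ∧ ∀ x ∈ ball x₀ r, ‖g x‖ ≤ C := by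
  have hnear : ∀ᶠ x in nhds x₀, ‖g x‖ < ‖g x₀‖ + 1 :=
    hg.norm.eventually_lt_const (lt_add_one _)
  obtain ⟨ε, hε, hball⟩ := eventually_nhds_iff_ball.mp hnear
  exact ⟨min ε R, ‖g x₀‖ + 1, lt_min hε hR, min_le_right _ _, by positivity,
    fun x hx => (hball x (ball_subset_ball (min_le_left _ _) hx)).le⟩

section Coercivity

variable {E F : Type*} [NormedAddCommGroup E] [InnerProductSpace ℝ E] [CompleteSpace E]
  [NormedAddCommGroup F] [InnerProductSpace ℝ F] [CompleteSpace F]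

theorem mul_norm_sq_le_inner_adjoint_apply_iff (A : E →L[ℝ] F) {β : ℝ} (hβ : 0 ≤ β) (v : E) :
    β * ‖v‖ ^ 2 ≤ ⟪A.adjoint (A v), v⟫ ↔ √β * ‖v‖ ≤ ‖A v‖ := by
  rw [A.adjoint_inner_left, real_inner_self_eq_norm_sq,
    ← sq_le_sq₀ (by positivity) (norm_nonneg _), mul_pow, Real.sq_sqrt hβ]

theorem exists_mul_norm_sq_le_inner_adjoint_apply {A : E →L[ℝ] F} (hA : Function.Injective A)
    (hrange : IsClosed (Set.range A)) :
    ∃ β > 0, ∀ v, β * ‖v‖ ^ 2 ≤ ⟪A.adjoint (A v), v⟫ := by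
  obtain ⟨K, hK⟩ := A.antilipschitz_of_injective_of_isClosed_range hA hrange
  -- `K` may vanish when `E` is trivial, hence the shift by one.
  have hbound : ∀ v, ‖v‖ ≤ (K + 1) * ‖A v‖ := fun v =>
    (A.bound_of_antilipschitz hK v).trans (by gcongr; exact le_add_of_nonneg_right zero_le_one)
  refine ⟨((K + 1 : ℝ)⁻¹) ^ 2, by positivity, fun v => ?_⟩
  rw [mul_norm_sq_le_inner_adjoint_apply_iff A (by positivity), Real.sqrt_sq (by positivity),
    inv_mul_le_iff₀ (by positivity)]
  exact hbound v

theorem stmt_5_general {α₀ : E} {R : ℝ} (hR : 0 < R) {Φ : E → F}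
    (hΦ : ContDiffOn ℝ 2 Φ (ball α₀ R)) (hinj : Function.Injective (fderiv ℝ Φ α₀))
    (hrange : IsClosed (Set.range (fderiv ℝ Φ α₀))) :
    ∃ r β γ : ℝ, 0 < r ∧ r ≤ R ∧ 0 < β ∧ 0 < γ ∧
      (∀ v, β * ‖v‖ ^ 2 ≤ ⟪(fderiv ℝ Φ α₀).adjoint (fderiv ℝ Φ α₀ v), v⟫) ∧
      (∀ α ∈ ball α₀ r, ‖iteratedFDeriv ℝ 2 Φ α‖ ≤ γ) ∧
      Set.InjOn Φ (ball α₀ (min r (√β / (6 * γ)))) ∧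
      ∃ Φinv : F → E,
        Set.MapsTo Φinv (Φ '' ball α₀ (min r (√β / (6 * γ)))) (ball α₀ (min r (√β / (6 * γ)))) ∧
        ∀ α ∈ ball α₀ (min r (√β / (6 * γ))), Φinv (Φ α) = α := by
  have hΦat : ∀ α ∈ ball α₀ R, ContDiffAt ℝ 2 Φ α := fun α hα =>
    hΦ.contDiffAt (isOpen_ball.mem_nhds hα)
  obtain ⟨β, hβ, hcoercive⟩ := exists_mul_norm_sq_le_inner_adjoint_apply hinj hrange
  obtain ⟨r, γ, hr, hrR, hγ, hD2⟩ := exists_norm_le_on_ball_of_continuousAt hR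
    ((hΦat α₀ (mem_ball_self hR)).continuousAt_iteratedFDeriv (k := 2) le_rfl)
  have hbelow : ∀ v, √β * ‖v‖ ≤ ‖fderiv ℝ Φ α₀ v‖ := fun v =>
    (mul_norm_sq_le_inner_adjoint_apply_iff _ hβ.le v).mp (hcoercive v)
  have hradius : γ * min r (√β / (6 * γ)) < √β := calc
    γ * min r (√β / (6 * γ)) ≤ γ * (√β / (6 * γ)) := by gcongr; exact min_le_right _ _
    _ = √β / 6 := by field_simp
    _ < √β := div_lt_self (Real.sqrt_pos.mpr hβ) (by norm_num)
  have hsub : ball α₀ (min r (√β / (6 * γ))) ⊆ ball α₀ r := ball_subset_ball (min_le_left _ _)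
  have hinjOn : Set.InjOn Φ (ball α₀ (min r (√β / (6 * γ)))) :=
    injOn_ball_of_norm_iteratedFDeriv_two_le
      (fun α hα => hΦat α (ball_subset_ball hrR (hsub hα))) hbelow
      (fun α hα => hD2 α (hsub hα)) hradius
  exact ⟨r, β, γ, hr, hrR, hβ, hγ, hcoercive, hD2, hinjOn, Function.invFunOn Φ _,
    (Set.surjOn_image Φ _).mapsTo_invFunOn, fun _ hα => hinjOn.leftInvOn_invFunOn hα⟩

end Coercivity

/-- Corollary: if `Φ : B(α₀,R) ⊆ ℝ^n → ℝ^N` is `C²` and `DΦ(α₀)` is injective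
(i.e. `Φ(α₀)` arises as a regular value), then there are `r, β, γ > 0` with `r ≤ R`
such that `⟨DΦ(α₀)ᵀ DΦ(α₀) v, v⟩ ≥ β ‖v‖²` for all `v` and `‖D²Φ(α)‖ ≤ γ` on
`B(α₀,r)`; consequently `Φ` is injective on `B(α₀, min r (√β/(6γ)))` and there is a
left inverse `Φ⁻¹` defined on `Φ(B(α₀, min r (√β/(6γ))))` returning the true
parameters. -/
theorem stmt_5 (n N : ℕ) (α₀ : EuclideanSpace ℝ (Fin n)) (R : ℝ) (hR : 0 < R)
    (Φ : EuclideanSpace ℝ (Fin n) → EuclideanSpace ℝ (Fin N))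
    (hΦ : ContDiffOn ℝ 2 Φ (ball α₀ R))
    (hinj : Function.Injective (fderiv ℝ Φ α₀)) :
    ∃ (r β γ : ℝ), 0 < r ∧ r ≤ R ∧ 0 < β ∧ 0 < γ ∧
      (∀ v : EuclideanSpace ℝ (Fin n),
        β * ‖v‖ ^ 2 ≤ ⟪(ContinuousLinearMap.adjoint (fderiv ℝ Φ α₀)) ((fderiv ℝ Φ α₀) v), v⟫) ∧
      (∀ α ∈ ball α₀ r, ‖iteratedFDeriv ℝ 2 Φ α‖ ≤ γ) ∧
      Set.InjOn Φ (ball α₀ (min r (Real.sqrt β / (6 * γ)))) ∧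
      ∃ Φinv : EuclideanSpace ℝ (Fin N) → EuclideanSpace ℝ (Fin n),
        Set.MapsTo Φinv (Φ '' ball α₀ (min r (Real.sqrt β / (6 * γ))))
          (ball α₀ (min r (Real.sqrt β / (6 * γ)))) ∧
        ∀ α ∈ ball α₀ (min r (Real.sqrt β / (6 * γ))), Φinv (Φ α) = α :=
  stmt_5_general hR hΦ hinj
    (LinearMap.range (fderiv ℝ Φ α₀).toLinearMap).closed_of_finiteDimensional
end

section
/- Fix h > 0 and n ≥ 1. The set C of real n×n matrices α₀ for which there exist two roots λ₁, λ₂ (counted among the complex roots of the characteristic polynomial of α₀) with λ₁ ≠ λ₂ and λ₁ − λ₂ ∈ (2πi/h)·ℤ, or with λ₁ = λ₂ a repeated root, has Lebesgue measure zero in the space of n×n real matrices identified with ℝ^{n²}. -/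
open MeasureTheory

/-!
Two polynomials over a field, one of them monic, are coprime iff their resultant does not vanish.
For the characteristic polynomial `χ` of a matrix, the resultants of `χ` with `χ'` and with
`χ(X + c)` are polynomials in the entries of the matrix. The first is nonzero at a diagonal matrix
with distinct entries and the second, for `c ≠ 0`, at the zero matrix, so both are nonzero almost
everywhere: an analytic function which does not vanish at `x` has a discrete zero set on each line
through `x`. Coprimality with `χ'` excludes repeated roots, coprimality with `χ(X + c)` excludes
roots at distance `c`, and only countably many `c` have to be considered.
-/

section Analytic

variable {E : Type*} [NormedAddCommGroup E] [NormedSpace ℝ E] [FiniteDimensional ℝ E]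
  [MeasurableSpace E] [BorelSpace E] (μ : Measure E) [μ.IsAddHaarMeasure]

theorem ae_mem_of_forall_ae_add_smul_mem {s : Set E} (hs : MeasurableSet s) (x : E)
    (h : ∀ v, ∀ᵐ t : ℝ, x + t • v ∈ s) : ∀ᵐ y ∂μ, y ∈ s := by
  have hmeas : MeasurableSet {p : ℝ × E | x + p.1 • p.2 ∈ s} :=
    (show Continuous fun p : ℝ × E => x + p.1 • p.2 by fun_prop).measurable hs
  have hlines : ∀ᵐ t : ℝ, ∀ᵐ v ∂μ, x + t • v ∈ s :=
    (Measure.ae_ae_comm hmeas).2 (.of_forall h)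
  obtain ⟨t, ht, ht0⟩ := (hlines.and (Measure.ae_ne volume (0 : ℝ))).exists
  have hpre : μ ((t • ·) ⁻¹' ((x + ·) ⁻¹' sᶜ)) = 0 := ht
  rw [Measure.addHaar_preimage_smul μ ht0, measure_preimage_add] at hpre
  refine (mul_eq_zero.1 hpre).resolve_left ?_
  exact (ENNReal.ofReal_pos.2 (abs_pos.2 (inv_ne_zero (pow_ne_zero _ ht0)))).ne'

theorem ae_ne_zero_of_analyticOnNhd {F : Type*} [NormedAddCommGroup F] [NormedSpace ℝ F]
    {f : E → F} (hf : AnalyticOnNhd ℝ f Set.univ) {x : E} (hx : f x ≠ 0) :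
    ∀ᵐ y ∂μ, f y ≠ 0 := by
  have hopen : IsOpen {y | f y ≠ 0} := isOpen_ne_fun hf.continuous continuous_const
  refine ae_mem_of_forall_ae_add_smul_mem μ hopen.measurableSet x fun v => ?_
  have hline : AnalyticOnNhd ℝ (fun t : ℝ => f (x + t • v)) Set.univ :=
    hf.comp (fun t _ => by fun_prop) (Set.mapsTo_univ _ _)
  have hcodisc := hline.preimage_zero_mem_codiscrete (x := 0) (by simpa using hx)
  have hae := ae_restrict_le_codiscreteWithin (μ := volume) MeasurableSet.univ hcodisc
  rwa [Measure.restrict_univ] at hae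

end Analytic

section Resultant

open Polynomial

theorem map_resultant_ne_zero_iff {R K : Type*} [CommRing R] [Field K] (φ : R →+* K) {p : R[X]}
    (hp : p.Monic) (q : R[X]) :
    φ (p.resultant q) ≠ 0 ↔ IsCoprime (p.map φ) (q.map φ) := by
  obtain ⟨k, hk⟩ := Nat.exists_eq_add_of_le (natDegree_map_le (f := φ) (p := q))
  rw [← isUnit_resultant_iff_isCoprime (hp.map φ), isUnit_iff_ne_zero, ← resultant_map_map, hk,
    resultant_add_right_deg _ _ _ _ _ le_rfl, ← hp.natDegree_map φ, (hp.map φ).coeff_natDegree,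
    one_pow, one_mul]

theorem ae_isCoprime_map_eval {E K σ : Type*} [NormedAddCommGroup E] [NormedSpace ℝ E]
    [FiniteDimensional ℝ E] [MeasurableSpace E] [BorelSpace E] (μ : Measure E)
    [μ.IsAddHaarMeasure] [NormedField K] [NormedAlgebra ℝ K] (L : E →ₗ[ℝ] σ → K)
    {p : (MvPolynomial σ K)[X]} (hp : p.Monic) (q : (MvPolynomial σ K)[X]) {x : E}
    (hx : IsCoprime (p.map (MvPolynomial.eval (L x))) (q.map (MvPolynomial.eval (L x)))) :
    ∀ᵐ y ∂μ, IsCoprime (p.map (MvPolynomial.eval (L y))) (q.map (MvPolynomial.eval (L y))) := by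
  simp only [← map_resultant_ne_zero_iff _ hp] at hx ⊢
  exact ae_ne_zero_of_analyticOnNhd μ (AnalyticOnNhd.eval_linearMap L _) hx

theorem not_isRoot_sub_of_isCoprime_taylor {R : Type*} [CommRing R] [Nontrivial R] {p : R[X]}
    {a b : R} (h : IsCoprime p (taylor (a - b) p)) (ha : p.IsRoot a) : ¬ p.IsRoot b := by
  intro hb
  have hb' : (taylor (a - b) p).IsRoot b := by
    rwa [IsRoot.def, taylor_eval, add_sub_cancel]
  obtain ⟨u, v, huv⟩ := h
  simpa [hb.eq_zero, hb'.eq_zero] using congrArg (eval b) huv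

theorem isCoprime_X_pow_taylor_X_pow {K : Type*} [Field K] {c : K} (hc : c ≠ 0) (n : ℕ) :
    IsCoprime (X ^ n : K[X]) (taylor c (X ^ n)) := by
  rw [taylor_X_pow]
  refine IsCoprime.pow ?_
  simpa using isCoprime_X_sub_C_of_isUnit_sub (a := (0 : K)) (b := -c) (by simpa using hc)

end Resultant

section Charpoly

open Polynomial

variable {ι : Type*} [Fintype ι] [DecidableEq ι]

/-- The entries of a real matrix as a complex point of the affine space of matrices, linearly in
the matrix. The variables of `Matrix.charpoly.univ` are indexed by `ι × ι`, hence the uncurrying. -/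
noncomputable def complexEntries (ι : Type*) : (ι → ι → ℝ) →ₗ[ℝ] ι × ι → ℂ where
  toFun A ij := A ij.1 ij.2
  map_add' A B := by ext; simp
  map_smul' t A := by ext; simp

theorem map_eval_complexEntries_charpoly_univ (A : ι → ι → ℝ) :
    (Matrix.charpoly.univ ℂ ι).map (MvPolynomial.eval (complexEntries ι A)) =
      ((Matrix.of A).map Complex.ofReal).charpoly :=
  Matrix.charpoly.univ_map_eval₂Hom ι (RingHom.id ℂ) _

theorem ae_separable_charpoly :
    ∀ᵐ A : ι → ι → ℝ, ((Matrix.of A).map Complex.ofReal).charpoly.Separable := by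
  obtain ⟨d, hd⟩ := Countable.exists_injective_nat ι
  let D : ι → ι → ℝ := Matrix.of.symm (Matrix.diagonal fun i => (d i : ℝ))
  have hD : ((Matrix.of D).map Complex.ofReal).charpoly.Separable := by
    rw [Equiv.apply_symm_apply, Matrix.diagonal_map Complex.ofReal_zero, Matrix.charpoly_diagonal,
      separable_prod_X_sub_C_iff]
    exact Complex.ofReal_injective.comp (Nat.cast_injective.comp hd)
  have hgeneric := ae_isCoprime_map_eval volume (complexEntries ι)
    (Matrix.charpoly.univ_monic ℂ ι) (Matrix.charpoly.univ ℂ ι).derivative (x := D)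
  simp only [← derivative_map, map_eval_complexEntries_charpoly_univ] at hgeneric
  exact hgeneric hD

theorem ae_isCoprime_charpoly_taylor {c : ℂ} (hc : c ≠ 0) :
    ∀ᵐ A : ι → ι → ℝ, IsCoprime ((Matrix.of A).map Complex.ofReal).charpoly
      (taylor c ((Matrix.of A).map Complex.ofReal).charpoly) := by
  have hzero : ((Matrix.of (0 : ι → ι → ℝ)).map Complex.ofReal).charpoly =
      X ^ Fintype.card ι := by
    rw [Matrix.of_zero, Matrix.map_zero _ Complex.ofReal_zero, Matrix.charpoly_zero]
  have hgeneric := ae_isCoprime_map_eval volume (complexEntries ι)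
    (Matrix.charpoly.univ_monic ℂ ι) (taylor (MvPolynomial.C c) (Matrix.charpoly.univ ℂ ι))
    (x := 0)
  simp only [map_taylor, MvPolynomial.eval_C, map_eval_complexEntries_charpoly_univ, hzero]
    at hgeneric
  exact hgeneric (isCoprime_X_pow_taylor_X_pow hc _)

end Charpoly

theorem stmt_7_general {ι κ : Type*} [Fintype ι] [DecidableEq ι] [Countable κ] (c : κ → ℂ) :
    volume {α₀ : ι → ι → ℝ |
      (∃ l₁ l₂ : ℂ, ((Matrix.of α₀).map Complex.ofReal).charpoly.IsRoot l₁ ∧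
        ((Matrix.of α₀).map Complex.ofReal).charpoly.IsRoot l₂ ∧ l₁ ≠ l₂ ∧
        ∃ k, l₁ - l₂ = c k) ∨
      (∃ l : ℂ, 2 ≤ Polynomial.rootMultiplicity l
        ((Matrix.of α₀).map Complex.ofReal).charpoly)} = 0 := by
  have hcoprime : ∀ᵐ A : ι → ι → ℝ, ∀ k, c k ≠ 0 →
      IsCoprime ((Matrix.of A).map Complex.ofReal).charpoly
        (Polynomial.taylor (c k) ((Matrix.of A).map Complex.ofReal).charpoly) :=
    ae_all_iff.2 fun _ => Filter.eventually_imp_distrib_left.2 ae_isCoprime_charpoly_taylor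
  rw [measure_eq_zero_iff_ae_notMem]
  filter_upwards [hcoprime, ae_separable_charpoly] with A hA hsep
  rintro (⟨l₁, l₂, h₁, h₂, hne, k, hk⟩ | ⟨l, hl⟩)
  · have hshift := hA k (hk ▸ sub_ne_zero.2 hne)
    rw [← hk] at hshift
    exact not_isRoot_sub_of_isCoprime_taylor hshift h₁ h₂
  · exact hl.not_gt (Nat.lt_succ_of_le (Polynomial.rootMultiplicity_le_one_of_separable hsep l))

/-- Fix `h > 0` and `n ≥ 1`. The set of real `n×n` matrices `α₀` having two complex
characteristic roots `λ₁ ≠ λ₂` with `λ₁ − λ₂ ∈ (2πi/h)·ℤ`, or a repeated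
characteristic root, has Lebesgue measure zero in `M_n(ℝ) ≅ ℝ^{n²}`. -/
theorem stmt_7 (h : ℝ) (hh : 0 < h) (n : ℕ) (hn : 1 ≤ n) :
    volume {α₀ : Fin n → Fin n → ℝ |
      (∃ l₁ l₂ : ℂ, ((Matrix.of α₀).map Complex.ofReal).charpoly.IsRoot l₁ ∧
        ((Matrix.of α₀).map Complex.ofReal).charpoly.IsRoot l₂ ∧ l₁ ≠ l₂ ∧
        ∃ k : ℤ, l₁ - l₂ = 2 * Real.pi * Complex.I / h * k) ∨
      (∃ l : ℂ, 2 ≤ Polynomial.rootMultiplicity l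
        ((Matrix.of α₀).map Complex.ofReal).charpoly)} = 0 :=
  stmt_7_general fun k : ℤ => 2 * Real.pi * Complex.I / h * k
end

section
/- Let f : ℝ^k × ℝ^n → ℝ^k be real-analytic on all of ℝ^k × ℝ^n with infinite radius of convergence, and let α₀ ∈ ℝ^n, x₀ ∈ ℝ^k be such that the solution of the initial value problem X' (t) = f(X(t), α₀), X(0) = x₀ exists on the interval [0, T]. Then there exist t₀ > 0, t₁ > T, open neighborhoods V_{α₀} ∋ α₀ and V_{x₀} ∋ x₀, and a map X : (−t₀, t₁) × V_{α₀} × V_{x₀} → ℝ^k that is jointly real-analytic in (t, α, x), satisfies X(0, α, x) = x for all (α, x) ∈ V_{α₀} × V_{x₀}, and satisfies ∂X/∂t(t, α, x) = f(X(t, α, x), α) for all (t, α, x) ∈ (−t₀, t₁) × V_{α₀} × V_{x₀}. -/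
/-! Adjoining the constant parameters to the state turns the problem into an autonomous equation
`x' = g x` with `g = (f, 0)` analytic. The local flow of `g` is analytic: the rescaled solution
`u s = x (τ s)` solves `u = x + τ ∫ g ∘ u` in `C([0, 1], E)`, where `u ↦ g ∘ u` is analytic because
the power series of `g` acts pointwise, and at `τ = 0` the partial derivative of this equation in
`u` is the identity, so the implicit function theorem makes `u` an analytic function of `(τ, x)`.
Along the given orbit, "some analytic flow carries the point at time `s` to the point at time `t`"
is a transitive relation that holds for nearby times, hence for all times because `[0, T]` is
connected. -/

open Set Filter Metric
open scoped Topology ContDiff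

section PointwiseComposition

variable {𝕜 : Type*} [NontriviallyNormedField 𝕜] (K : Type*) [TopologicalSpace K] [CompactSpace K]
  {F : Type*} [NormedAddCommGroup F] [NormedSpace 𝕜 F]

/-- The continuous multilinear map on spaces of continuous functions that applies `p` at each
point of `K`. -/
noncomputable def pointwiseMultilinear {ι : Type*} [Fintype ι] {E : ι → Type*}
    [∀ i, NormedAddCommGroup (E i)] [∀ i, NormedSpace 𝕜 (E i)]
    (p : ContinuousMultilinearMap 𝕜 E F) :
    ContinuousMultilinearMap 𝕜 (fun i => C(K, E i)) C(K, F) :=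
  MultilinearMap.mkContinuous
    { toFun := fun u => ⟨fun s => p fun i => u i s, by fun_prop⟩
      map_update_add' := fun u i x y => ContinuousMap.ext fun s =>
        (p.compContinuousLinearMap fun _ => ContinuousMap.evalCLM 𝕜 s).map_update_add u i x y
      map_update_smul' := fun u i c x => ContinuousMap.ext fun s =>
        (p.compContinuousLinearMap fun _ => ContinuousMap.evalCLM 𝕜 s).map_update_smul u i c x }
    ‖p‖ fun u => (ContinuousMap.norm_le _ (by positivity)).2 fun s =>
      p.le_opNorm_mul_prod_of_le fun i => (u i).norm_coe_le_norm s

theorem norm_pointwiseMultilinear_le {ι : Type*} [Fintype ι] {E : ι → Type*}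
    [∀ i, NormedAddCommGroup (E i)] [∀ i, NormedSpace 𝕜 (E i)]
    (p : ContinuousMultilinearMap 𝕜 E F) : ‖pointwiseMultilinear K p‖ ≤ ‖p‖ :=
  MultilinearMap.mkContinuous_norm_le _ (norm_nonneg p) _

variable {E : Type*} [NormedAddCommGroup E] [NormedSpace 𝕜 E]

/-- The power series on `C(K, E)` obtained by applying the terms of `p` at each point of `K`. -/
noncomputable def pointwiseSeries (p : FormalMultilinearSeries 𝕜 E F) :
    FormalMultilinearSeries 𝕜 C(K, E) C(K, F) :=
  fun n => pointwiseMultilinear K (p n)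

theorem radius_le_radius_pointwiseSeries (p : FormalMultilinearSeries 𝕜 E F) :
    p.radius ≤ (pointwiseSeries K p).radius := by
  refine ENNReal.le_of_forall_nnreal_lt fun r hr => ?_
  refine (pointwiseSeries K p).le_radius_of_summable <|
    (p.summable_norm_mul_pow hr).of_nonneg_of_le (fun n => by positivity) fun n => ?_
  gcongr
  exact norm_pointwiseMultilinear_le K (p n)

variable [CompleteSpace F]

theorem pointwiseSeries_sum_apply {g : E → F} {z : E} {r : ENNReal}
    {p : FormalMultilinearSeries 𝕜 E F} (hp : HasFPowerSeriesOnBall g p z r) {y : C(K, E)}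
    (hy : y ∈ eball 0 r) (s : K) : (pointwiseSeries K p).sum y s = g (z + y s) := by
  have hsum : Summable fun n => pointwiseSeries K p n fun _ => y :=
    (pointwiseSeries K p).summable <|
      eball_subset_eball (hp.r_le.trans (radius_le_radius_pointwiseSeries K p)) hy
  have hys : y s ∈ eball 0 r := by
    rw [mem_eball_zero_iff] at hy ⊢
    exact (enorm_le_iff_norm_le.2 (y.norm_coe_le_norm s)).trans_lt hy
  exact (ContinuousMap.hasSum_apply hsum.hasSum s).unique (hp.hasSum hys)

theorem exists_analyticAt_pointwise_comp {g : E → F} {z : E} (hg : AnalyticAt 𝕜 g z) :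
    ∃ N : C(K, E) → C(K, F), AnalyticAt 𝕜 N (.const K z) ∧
      ∀ᶠ u in 𝓝 (ContinuousMap.const K z), ∀ s, N u s = g (u s) := by
  obtain ⟨p, r, hp⟩ := hg
  let P := pointwiseSeries K p
  refine ⟨fun u => P.sum (u - .const K z), ?_, ?_⟩
  · have hP : AnalyticAt 𝕜 P.sum (.const K z - .const K z) := by
      rw [sub_self]
      exact (P.hasFPowerSeriesOnBall
        (hp.radius_pos.trans_le (radius_le_radius_pointwiseSeries K p))).analyticAt
    have hsub : AnalyticAt 𝕜 (fun u : C(K, E) => u - .const K z) (.const K z) :=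
      analyticAt_id.sub analyticAt_const
    exact AnalyticAt.fun_comp (g := P.sum) hP hsub
  · filter_upwards [eball_mem_nhds _ hp.r_pos] with u hu s
    have hy : u - .const K z ∈ eball 0 r := by
      rwa [mem_eball_zero_iff, ← edist_eq_enorm_sub]
    simpa using pointwiseSeries_sum_apply K hp hy s

end PointwiseComposition

section Primitive

variable {E : Type*} [NormedAddCommGroup E] [NormedSpace ℝ E] {a b : ℝ}

/-- The operator sending a continuous function on `[a, b]` to its primitive vanishing at `a`. -/
noncomputable def primitiveCLM (h : a ≤ b) : C(Icc a b, E) →L[ℝ] C(Icc a b, E) :=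
  have hint (u : C(Icc a b, E)) (c d : ℝ) :
      IntervalIntegrable (IccExtend h u) MeasureTheory.volume c d :=
    u.continuous.Icc_extend'.intervalIntegrable c d
  LinearMap.mkContinuous
    { toFun := fun u => ⟨fun s => ∫ r in a..s, IccExtend h u r,
        (intervalIntegral.continuous_primitive (hint u) a).comp continuous_subtype_val⟩
      map_add' := fun u v => ContinuousMap.ext fun s =>
        intervalIntegral.integral_add (hint u a s) (hint v a s)
      map_smul' := fun c u => ContinuousMap.ext fun s =>
        intervalIntegral.integral_smul c (IccExtend h u) }
    (b - a) fun u => by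
      refine (ContinuousMap.norm_le _ (mul_nonneg (sub_nonneg.2 h) (norm_nonneg u))).2 fun s => ?_
      calc ‖∫ r in a..s, IccExtend h u r‖
        _ ≤ ‖u‖ * |s - a| := intervalIntegral.norm_integral_le_of_norm_le_const
            fun r _ => u.norm_coe_le_norm _
        _ ≤ (b - a) * ‖u‖ := by
            rw [mul_comm, abs_of_nonneg (sub_nonneg.2 s.2.1)]
            gcongr
            exact s.2.2

theorem primitiveCLM_apply (h : a ≤ b) (u : C(Icc a b, E)) (s : Icc a b) :
    primitiveCLM h u s = ∫ r in a..s, IccExtend h u r :=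
  rfl

end Primitive

section IntegralEquation

variable {E : Type*} [NormedAddCommGroup E] [NormedSpace ℝ E] [CompleteSpace E]

theorem exists_analyticAt_solution_integralEquation {g : E → E} {z : E} (hg : AnalyticAt ℝ g z) :
    ∃ U : ℝ × E → C(Icc (0 : ℝ) 1, E), AnalyticAt ℝ U (0, z) ∧
      ∀ᶠ p in 𝓝 (((0 : ℝ), z), ContinuousMap.const (Icc (0 : ℝ) 1) z),
        (∀ s : Icc (0 : ℝ) 1,
          p.2 s = p.1.2 + p.1.1 • ∫ r in 0..(s : ℝ), g (IccExtend zero_le_one p.2 r)) →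
        U p.1 = p.2 := by
  obtain ⟨N, hN, hNg⟩ := exists_analyticAt_pointwise_comp (Icc (0 : ℝ) 1) hg
  let Φ : (ℝ × E) × C(Icc (0 : ℝ) 1, E) → C(Icc (0 : ℝ) 1, E) := fun p =>
    p.2 - ContinuousLinearMap.const ℝ _ p.1.2 - p.1.1 • primitiveCLM zero_le_one (N p.2)
  let p₀ : (ℝ × E) × C(Icc (0 : ℝ) 1, E) := ((0, z), .const _ z)
  have hΦ : ContDiffAt ℝ ω Φ p₀ := by
    have hN' : ContDiffAt ℝ ω N p₀.2 := hN.contDiffAt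
    fun_prop
  have hpartial : fderiv ℝ Φ p₀ ∘L .inr ℝ _ _ = .id ℝ _ := by
    have hslice : (fun u => Φ ((0, z), u)) = fun u => u - ContinuousLinearMap.const ℝ _ z := by
      simp [Φ]
    have hchain := (hΦ.differentiableAt (by simp)).hasFDerivAt.comp p₀.2
      (hasFDerivAt_prodMk_right (𝕜 := ℝ) p₀.1 p₀.2)
    have hid : HasFDerivAt (fun u => Φ ((0, z), u)) (.id ℝ _) p₀.2 := by
      rw [hslice]
      exact (hasFDerivAt_id _).sub_const _
    exact hchain.unique hid
  have hinv : (fderiv ℝ Φ p₀ ∘L .inr ℝ _ _).IsInvertible :=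
    hpartial ▸ ⟨.refl ℝ _, rfl⟩
  refine ⟨hΦ.implicitFunction (by simp) hinv,
    (hΦ.contDiffAt_implicitFunction (by simp) hinv).analyticAt, ?_⟩
  filter_upwards [hΦ.eventually_apply_eq_iff_implicitFunction (by simp) hinv,
    continuousAt_snd.eventually hNg] with p hp hpN hsol
  refine hp.1 (ContinuousMap.ext fun s => ?_)
  have hcomp : IccExtend zero_le_one (N p.2) = fun r => g (IccExtend zero_le_one p.2 r) :=
    funext fun r => hpN _
  simp [Φ, p₀, primitiveCLM_apply, hcomp, hsol s]

end IntegralEquation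

section LocalFlow

variable {E : Type*} [NormedAddCommGroup E] [NormedSpace ℝ E] [CompleteSpace E] {g : E → E} {z : E}

theorem exists_continuousAt_local_flow (hg : ContDiffAt ℝ 1 g z) :
    ∃ φ : ℝ × E → E, ContinuousAt φ (0, z) ∧ (∀ᶠ x in 𝓝 z, φ (0, x) = x) ∧
      ∀ᶠ q in 𝓝 ((0 : ℝ), z), HasDerivAt (fun t => φ (t, q.2)) (g (φ q)) q.1 := by
  obtain ⟨ε, hε, a, r, L, K, hr, hpl⟩ := IsPicardLindelof.of_contDiffAt_one hg
  obtain ⟨α, hα, hαc⟩ := (hpl 0).exists_forall_mem_closedBall_eq_hasDerivWithinAt_continuousOn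
  simp only [zero_sub, zero_add] at hα hαc
  have hball : closedBall z r ∈ 𝓝 z := closedBall_mem_nhds z hr
  have htime : Icc (-ε) ε ∈ 𝓝 (0 : ℝ) := Icc_mem_nhds (neg_neg_of_pos hε) hε
  refine ⟨α ∘ Prod.swap, ?_, ?_, ?_⟩
  · exact ContinuousAt.comp (f := Prod.swap) (hαc.continuousAt (prod_mem_nhds hball htime))
      continuous_swap.continuousAt
  · filter_upwards [hball] with x hx using (hα x hx).1
  · filter_upwards [prod_mem_nhds (eventually_mem_nhds_iff.2 htime) hball] with q hq
    exact ((hα q.2 hq.2).2 q.1 (mem_of_mem_nhds hq.1)).hasDerivAt hq.1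

theorem eventually_forall_Icc_mul_fst {X : Type*} [TopologicalSpace X] {z : X}
    {Q : ℝ × X → Prop} (hQ : ∀ᶠ q in 𝓝 ((0 : ℝ), z), Q q) :
    ∀ᶠ q in 𝓝 ((0 : ℝ), z), ∀ s ∈ Icc (0 : ℝ) 1, Q (s * q.1, q.2) := by
  refine isCompact_Icc.eventually_forall_of_forall_eventually fun s _ => ?_
  have hcont : Continuous fun w : (ℝ × X) × ℝ => (w.2 * w.1.1, w.1.2) := by fun_prop
  refine (hcont.tendsto' _ _ ?_).eventually hQ
  simp

theorem rescaled_eq_add_integral {γ : ℝ → E} {τ : ℝ}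
    (hγ : ∀ s ∈ Icc (0 : ℝ) 1, HasDerivAt γ (g (γ (s * τ))) (s * τ))
    (hg : ∀ s ∈ Icc (0 : ℝ) 1, ContinuousAt g (γ (s * τ)))
    {u : C(Icc (0 : ℝ) 1, E)} (hu : ∀ s : Icc (0 : ℝ) 1, u s = γ (s * τ)) (s : Icc (0 : ℝ) 1) :
    u s = γ 0 + τ • ∫ r in 0..(s : ℝ), g (IccExtend zero_le_one u r) := by
  have hsub : uIcc 0 (s : ℝ) ⊆ Icc 0 1 := uIcc_subset_Icc (by simp) s.2
  have hderiv : ∀ r ∈ uIcc 0 (s : ℝ), HasDerivAt (fun r => γ (r * τ)) (τ • g (γ (r * τ))) r :=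
    fun r hr => (hγ r (hsub hr)).scomp r (hasDerivAt_mul_const τ)
  have hcont : ContinuousOn (fun r => τ • g (γ (r * τ))) (uIcc 0 (s : ℝ)) := fun r hr =>
    ((ContinuousAt.comp (f := fun r => γ (r * τ)) (hg r (hsub hr))
      (hderiv r hr).continuousAt).const_smul τ).continuousWithinAt
  have hftc := intervalIntegral.integral_eq_sub_of_hasDerivAt hderiv hcont.intervalIntegrable
  have hext : ∫ r in 0..(s : ℝ), g (IccExtend zero_le_one u r) = ∫ r in 0..(s : ℝ), g (γ (r * τ)) :=
    intervalIntegral.integral_congr fun r hr => by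
      simp only [IccExtend_of_mem _ _ (hsub hr), hu]
  rw [hext, hu, ← intervalIntegral.integral_smul, hftc, zero_mul, add_sub_cancel]

theorem analyticAt_local_flow {φ : ℝ × E → E} (hg : AnalyticAt ℝ g z)
    (hφ : ContinuousAt φ (0, z)) (hφ0 : ∀ᶠ x in 𝓝 z, φ (0, x) = x)
    (hφ' : ∀ᶠ q in 𝓝 ((0 : ℝ), z), HasDerivAt (fun t => φ (t, q.2)) (g (φ q)) q.1) :
    AnalyticAt ℝ φ (0, z) := by
  obtain ⟨U, hU, hUsol⟩ := exists_analyticAt_solution_integralEquation hg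
  rw [nhds_prod_eq, eventually_prod_iff] at hUsol
  obtain ⟨P, hP, Q, hQ, hPQ⟩ := hUsol
  obtain ⟨ρ, hρ, hball⟩ := eventually_nhds_iff_ball.1 hQ
  have hlim : Tendsto φ (𝓝 (0, z)) (𝓝 z) := by
    simpa only [hφ0.self_of_nhds] using hφ.tendsto
  have hnear := hlim.eventually (hg.eventually_analyticAt.and (ball_mem_nhds z hρ))
  have hU1 : AnalyticAt ℝ (fun q => ContinuousMap.evalCLM ℝ (1 : Icc (0 : ℝ) 1) (U q)) (0, z) :=
    (ContinuousLinearMap.analyticAt _ _).fun_comp hU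
  refine hU1.congr ?_
  filter_upwards [hP, continuousAt_snd.eventually hφ0,
    eventually_forall_Icc_mul_fst (hφ'.and hnear)] with ⟨τ, x⟩ hPτ hx0 hcurve
  have hcont : ContinuousOn (fun s => φ (s * τ, x)) (Icc 0 1) := fun s hs =>
    (ContinuousAt.comp (f := fun s => s * τ) (hcurve s hs).1.continuousAt
      (by fun_prop)).continuousWithinAt
  let u : C(Icc (0 : ℝ) 1, E) := ⟨fun s => φ (s * τ, x), hcont.domRestrict⟩
  have hu : dist u (.const _ z) < ρ :=
    (ContinuousMap.dist_lt_iff hρ).2 fun s => (hcurve s s.2).2.2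
  have hsol : U (τ, x) = u := hPQ hPτ (hball u hu) fun s => by
    have hu_eq := rescaled_eq_add_integral (γ := fun t => φ (t, x)) (fun r hr => (hcurve r hr).1)
      (fun r hr => (hcurve r hr).2.1.continuousAt) (u := u) (fun _ => rfl) s
    rwa [hx0] at hu_eq
  calc U (τ, x) 1
    _ = φ (1 * τ, x) := by rw [hsol]; rfl
    _ = φ (τ, x) := by rw [one_mul]

end LocalFlow

section Uniqueness

variable {E : Type*} [NormedAddCommGroup E] [NormedSpace ℝ E] {g : E → E} {a b : ℝ → E}
  {S : Set ℝ} {s : ℝ}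

theorem eventuallyEq_of_isIntegralCurveOn (hS : S.OrdConnected)
    (ha : IsIntegralCurveOn a (fun _ => g) S) (hb : IsIntegralCurveOn b (fun _ => g) S)
    (hs : s ∈ S) (hg : ContDiffAt ℝ 1 g (a s)) (hab : a s = b s) : a =ᶠ[𝓝[S] s] b := by
  obtain ⟨K, V, hV, hlip⟩ := hg.exists_lipschitzOnWith
  have hnear : ∀ᶠ t in 𝓝[S] s, a t ∈ V ∧ b t ∈ V :=
    ((ha.continuousWithinAt hs).eventually hV).and
      ((hb.continuousWithinAt hs).eventually (hab ▸ hV))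
  obtain ⟨ε, hε, hball⟩ := mem_nhdsWithin_iff.1 hnear
  have hconn : (ball s ε ∩ S).OrdConnected := (convex_ball s ε).ordConnected.inter hS
  filter_upwards [inter_mem_nhdsWithin S (ball_mem_nhds s hε)] with t ht
  have hseg : uIcc s t ⊆ ball s ε ∩ S :=
    hconn.uIcc_subset ⟨mem_ball_self hε, hs⟩ ⟨ht.2, ht.1⟩
  rcases le_total s t with hst | hts
  · rw [uIcc_of_le hst] at hseg
    have hIci : ∀ r ∈ Ico s t, S ∈ 𝓝[≥] r := fun r hr =>
      mem_of_superset (Icc_mem_nhdsGE_of_mem hr) fun _ h => (hseg h).2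
    have hmem := Ico_subset_Icc_self.trans hseg
    exact ODE_solution_unique_of_mem_Icc_right (v := fun _ => g) (s := fun _ => V)
      (fun _ _ => hlip)
      (ha.continuousOn.mono fun r hr => (hseg hr).2)
      (fun r hr => (ha r (hmem hr).2).mono_of_mem_nhdsWithin (hIci r hr))
      (fun r hr => (hball (hmem hr)).1)
      (hb.continuousOn.mono fun r hr => (hseg hr).2)
      (fun r hr => (hb r (hmem hr).2).mono_of_mem_nhdsWithin (hIci r hr))
      (fun r hr => (hball (hmem hr)).2) hab (right_mem_Icc.2 hst)
  · rw [uIcc_of_ge hts] at hseg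
    have hIic : ∀ r ∈ Ioc t s, S ∈ 𝓝[≤] r := fun r hr =>
      mem_of_superset (Icc_mem_nhdsLE_of_mem hr) fun _ h => (hseg h).2
    have hmem := Ioc_subset_Icc_self.trans hseg
    exact ODE_solution_unique_of_mem_Icc_left (v := fun _ => g) (s := fun _ => V)
      (fun _ _ => hlip)
      (ha.continuousOn.mono fun r hr => (hseg hr).2)
      (fun r hr => (ha r (hmem hr).2).mono_of_mem_nhdsWithin (hIic r hr))
      (fun r hr => (hball (hmem hr)).1)
      (hb.continuousOn.mono fun r hr => (hseg hr).2)
      (fun r hr => (hb r (hmem hr).2).mono_of_mem_nhdsWithin (hIic r hr))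
      (fun r hr => (hball (hmem hr)).2) hab (left_mem_Icc.2 hts)

theorem eqOn_of_isIntegralCurveOn (hS : S.OrdConnected)
    (ha : IsIntegralCurveOn a (fun _ => g) S) (hb : IsIntegralCurveOn b (fun _ => g) S)
    (hg : ∀ t ∈ S, ContDiffAt ℝ 1 g (a t)) (hs : s ∈ S) (hab : a s = b s) : EqOn a b S := by
  suffices ∀ t ∈ S, a s = b s ↔ a t = b t from fun t ht => (this t ht).1 hab
  refine fun t ht => hS.isPreconnected.induction₂ (fun s t => a s = b s ↔ a t = b t)
    (fun s hs => ?_) (fun _ _ _ _ _ _ => Iff.trans) (fun _ _ _ _ => Iff.symm) hs ht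
  by_cases hab : a s = b s
  · filter_upwards [eventuallyEq_of_isIntegralCurveOn hS ha hb hs (hg s hs) hab] with t ht
    exact iff_of_true hab ht
  · filter_upwards [((ha.continuousWithinAt hs).sub (hb.continuousWithinAt hs)).eventually_ne
      (sub_ne_zero.2 hab)] with t ht
    exact iff_of_false hab (sub_ne_zero.1 ht)

end Uniqueness

section AnalyticFlow

variable {E : Type*} [NormedAddCommGroup E] [NormedSpace ℝ E] {g : E → E}

/-- The family of curves `t ↦ X (t, p)` solves `x' = g x` analytically at `q`: it is analytic in
time and parameter, satisfies the equation at `q`, and takes at `q` a value where `g` is analytic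
(which makes the solution through that value unique). -/
structure IsAnalyticSolutionAt {P : Type*} [NormedAddCommGroup P] [NormedSpace ℝ P] (g : E → E)
    (X : ℝ × P → E) (q : ℝ × P) : Prop where
  analyticAt : AnalyticAt ℝ X q
  hasDerivAt : HasDerivAt (fun t => X (t, q.2)) (g (X q)) q.1
  analyticAt_field : AnalyticAt ℝ g (X q)

namespace IsAnalyticSolutionAt

variable {P Q : Type*} [NormedAddCommGroup P] [NormedSpace ℝ P] [NormedAddCommGroup Q]
  [NormedSpace ℝ Q]

theorem congr {X Y : ℝ × P → E} {q : ℝ × P} (hX : IsAnalyticSolutionAt g X q)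
    (hXY : X =ᶠ[𝓝 q] Y) : IsAnalyticSolutionAt g Y q where
  analyticAt := hX.analyticAt.congr hXY
  hasDerivAt := by
    have hline : Tendsto (fun t => (t, q.2)) (𝓝 q.1) (𝓝 q) :=
      (Continuous.prodMk_left q.2).tendsto q.1
    rw [← hXY.eq_of_nhds]
    exact hX.hasDerivAt.congr_of_eventuallyEq (hline.eventually hXY.symm)
  analyticAt_field := hXY.eq_of_nhds ▸ hX.analyticAt_field

theorem comp_sub {X : ℝ × P → E} {h : Q → P} {q : ℝ × Q} {s : ℝ}
    (hX : IsAnalyticSolutionAt g X (q.1 - s, h q.2)) (hh : AnalyticAt ℝ h q.2) :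
    IsAnalyticSolutionAt g (fun q => X (q.1 - s, h q.2)) q where
  analyticAt := by
    have hinner : AnalyticAt ℝ (fun q : ℝ × Q => (q.1 - s, h q.2)) q :=
      (analyticAt_fst.sub analyticAt_const).prod (hh.fun_comp analyticAt_snd)
    exact AnalyticAt.fun_comp (g := X) hX.analyticAt hinner
  hasDerivAt := hX.hasDerivAt.comp_sub_const q.1 s
  analyticAt_field := hX.analyticAt_field

theorem exists_union {X Y : ℝ × P → E} {D D' : Set (ℝ × P)}
    (hD : IsOpen D) (hD' : IsOpen D') (hX : ∀ q ∈ D, IsAnalyticSolutionAt g X q)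
    (hY : ∀ q ∈ D', IsAnalyticSolutionAt g Y q) (hXY : EqOn X Y (D ∩ D')) :
    ∃ Z, EqOn Z X D ∧ EqOn Z Y D' ∧ ∀ q ∈ D ∪ D', IsAnalyticSolutionAt g Z q := by
  classical
  have hZX : EqOn (D.piecewise X Y) X D := piecewise_eqOn _ _ _
  have hZY : EqOn (D.piecewise X Y) Y D' := fun q hq' => by
    by_cases hq : q ∈ D
    · rw [hZX hq, hXY ⟨hq, hq'⟩]
    · exact piecewise_eq_of_notMem _ _ _ hq
  refine ⟨D.piecewise X Y, hZX, hZY, ?_⟩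
  rintro q (hq | hq)
  · exact (hX q hq).congr (hZX.symm.eventuallyEq_of_mem (hD.mem_nhds hq))
  · exact (hY q hq).congr (hZY.symm.eventuallyEq_of_mem (hD'.mem_nhds hq))

end IsAnalyticSolutionAt

/-- `φ` is an analytic flow of `g`, defined for times in the open interval `I` and initial values
in the open set `B`. -/
structure IsAnalyticFlowOn (g : E → E) (φ : ℝ × E → E) (I : Set ℝ) (B : Set E) : Prop where
  isOpen_time : IsOpen I
  ordConnected_time : I.OrdConnected
  zero_mem_time : 0 ∈ I
  isOpen_init : IsOpen B
  apply_zero : ∀ x ∈ B, φ (0, x) = x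
  isAnalyticSolutionAt : ∀ q ∈ I ×ˢ B, IsAnalyticSolutionAt g φ q

theorem exists_isAnalyticFlowOn [CompleteSpace E] {z : E} (hg : AnalyticAt ℝ g z) :
    ∃ φ I B, IsAnalyticFlowOn g φ I B ∧ z ∈ B := by
  obtain ⟨φ, hφ, hφ0, hφ'⟩ := exists_continuousAt_local_flow hg.contDiffAt
  have hlim : Tendsto φ (𝓝 (0, z)) (𝓝 z) := by
    simpa only [hφ0.self_of_nhds] using hφ.tendsto
  obtain ⟨ε, hε, hball⟩ := eventually_nhds_iff_ball.1 <|
    (analyticAt_local_flow hg hφ hφ0 hφ').eventually_analyticAt.and <|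
      hφ'.and <| (hlim.eventually hg.eventually_analyticAt).and (continuousAt_snd.eventually hφ0)
  simp only [← ball_prod_same] at hball
  refine ⟨φ, ball 0 ε, ball z ε, ?_, mem_ball_self hε⟩
  exact
    { isOpen_time := isOpen_ball
      ordConnected_time := (convex_ball 0 ε).ordConnected
      zero_mem_time := mem_ball_self hε
      isOpen_init := isOpen_ball
      apply_zero := fun x hx => (hball (0, x) ⟨mem_ball_self hε, hx⟩).2.2.2
      isAnalyticSolutionAt := fun q hq =>
        ⟨(hball q hq).1, (hball q hq).2.1, (hball q hq).2.2.1⟩ }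

namespace IsAnalyticFlowOn

variable {φ ψ : ℝ × E → E} {I J : Set ℝ} {B C : Set E}

theorem isIntegralCurveOn (hφ : IsAnalyticFlowOn g φ I B) {x : E} (hx : x ∈ B) :
    IsIntegralCurveOn (fun t => φ (t, x)) (fun _ => g) I := fun t ht =>
  (hφ.isAnalyticSolutionAt (t, x) ⟨ht, hx⟩).hasDerivAt.hasDerivWithinAt

theorem apply_sub_eq [CompleteSpace E] (hφ : IsAnalyticFlowOn g φ I B) {γ : ℝ → E} {S : Set ℝ}
    (hS : S.OrdConnected) (hγ : IsIntegralCurveOn γ (fun _ => g) S) {s t : ℝ} (hs : s ∈ S)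
    (ht : t ∈ S) (hts : t - s ∈ I) (hB : γ s ∈ B) : φ (t - s, γ s) = γ t := by
  have hconn : (S ∩ (fun r => r - s) ⁻¹' I).OrdConnected :=
    hS.inter (hφ.ordConnected_time.preimage_mono fun _ _ h => sub_le_sub_right h s)
  have hsol : ∀ r, r - s ∈ I → IsAnalyticSolutionAt g φ (r - s, γ s) := fun r hr =>
    hφ.isAnalyticSolutionAt _ ⟨hr, hB⟩
  refine eqOn_of_isIntegralCurveOn (a := fun r => φ (r - s, γ s)) (s := s) hconn
    (fun r hr => ((hsol r hr.2).hasDerivAt.comp_sub_const r s).hasDerivWithinAt)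
    (hγ.mono inter_subset_left) (fun r hr => (hsol r hr.2).analyticAt_field.contDiffAt)
    ⟨hs, ?_⟩ ?_ ⟨ht, hts⟩
  · simpa using hφ.zero_mem_time
  · simpa using hφ.apply_zero _ hB

theorem exists_trans [CompleteSpace E] (hφ : IsAnalyticFlowOn g φ I B)
    (hψ : IsAnalyticFlowOn g ψ J C) {s : ℝ} (hs : s ∈ I) :
    ∃ χ, IsAnalyticFlowOn g χ (I ∪ (fun t => t - s) ⁻¹' J) (B ∩ (fun x => φ (s, x)) ⁻¹' C) ∧
      ∀ t, t - s ∈ J → ∀ x ∈ B, φ (s, x) ∈ C → χ (t, x) = ψ (t - s, φ (s, x)) := by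
  set J' : Set ℝ := (fun t => t - s) ⁻¹' J with hJ'
  set B' : Set E := B ∩ (fun x => φ (s, x)) ⁻¹' C
  have hJ'conn : J'.OrdConnected :=
    hψ.ordConnected_time.preimage_mono fun _ _ h => sub_le_sub_right h s
  have hJ'open : IsOpen J' := hψ.isOpen_time.preimage (by fun_prop)
  have hsJ' : s ∈ J' := by simpa [hJ'] using hψ.zero_mem_time
  have hφs : ∀ x ∈ B, AnalyticAt ℝ (fun x => φ (s, x)) x := fun x hx =>
    AnalyticAt.fun_comp (g := φ) (hφ.isAnalyticSolutionAt (s, x) ⟨hs, hx⟩).analyticAt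
      (analyticAt_const.prod analyticAt_id)
  have hB'open : IsOpen B' := ContinuousOn.isOpen_inter_preimage
    (fun x hx => (hφs x hx).continuousAt.continuousWithinAt) hφ.isOpen_init hψ.isOpen_init
  have hψ' : ∀ q ∈ J' ×ˢ B', IsAnalyticSolutionAt g (fun q => ψ (q.1 - s, φ (s, q.2))) q :=
    fun q hq => IsAnalyticSolutionAt.comp_sub (h := fun x => φ (s, x))
      (hψ.isAnalyticSolutionAt _ ⟨hq.1, hq.2.2⟩) (hφs q.2 hq.2.1)
  have heq : EqOn φ (fun q => ψ (q.1 - s, φ (s, q.2))) (I ×ˢ B' ∩ J' ×ˢ B') := fun q hq =>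
    (hψ.apply_sub_eq hφ.ordConnected_time (hφ.isIntegralCurveOn hq.1.2.1) hs hq.1.1 hq.2.1
      hq.1.2.2).symm
  obtain ⟨χ, hχφ, hχψ, hχ⟩ := IsAnalyticSolutionAt.exists_union (hφ.isOpen_time.prod hB'open)
    (hJ'open.prod hB'open) (fun q hq => hφ.isAnalyticSolutionAt q ⟨hq.1, hq.2.1⟩) hψ' heq
  refine ⟨χ, ?_, fun t ht x hx hxC => hχψ (x := (t, x)) ⟨ht, hx, hxC⟩⟩
  exact
    { isOpen_time := hφ.isOpen_time.union hJ'open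
      ordConnected_time := (hφ.ordConnected_time.isPreconnected.union s hs hsJ'
        hJ'conn.isPreconnected).ordConnected
      zero_mem_time := .inl hφ.zero_mem_time
      isOpen_init := hB'open
      apply_zero := fun x hx => by rw [hχφ ⟨hφ.zero_mem_time, hx⟩, hφ.apply_zero x hx.1]
      isAnalyticSolutionAt := fun q hq => hχ q (union_prod ▸ hq) }

end IsAnalyticFlowOn

/-- Some analytic flow of `g` carries `z` to `w` in time `t`. -/
def FlowsTo (g : E → E) (z w : E) (t : ℝ) : Prop :=
  ∃ φ I B, IsAnalyticFlowOn g φ I B ∧ t ∈ I ∧ z ∈ B ∧ φ (t, z) = w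

theorem FlowsTo.trans [CompleteSpace E] {z w v : E} {s t : ℝ} (hzw : FlowsTo g z w s)
    (hwv : FlowsTo g w v t) : FlowsTo g z v (s + t) := by
  obtain ⟨φ, I, B, hφ, hs, hz, rfl⟩ := hzw
  obtain ⟨ψ, J, C, hψ, ht, hw, rfl⟩ := hwv
  obtain ⟨χ, hχ, hχ_eq⟩ := hφ.exists_trans hψ hs
  have hst : s + t - s ∈ J := by rwa [add_sub_cancel_left]
  refine ⟨χ, _, _, hχ, .inr hst, ⟨hz, hw⟩, ?_⟩
  rw [hχ_eq _ hst z hz hw, add_sub_cancel_left]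

theorem flowsTo_of_isIntegralCurveOn [CompleteSpace E] {γ : ℝ → E} {S : Set ℝ}
    (hS : S.OrdConnected) (hγ : IsIntegralCurveOn γ (fun _ => g) S)
    (hg : ∀ t ∈ S, AnalyticAt ℝ g (γ t)) {s t : ℝ} (hs : s ∈ S) (ht : t ∈ S) :
    FlowsTo g (γ s) (γ t) (t - s) := by
  refine hS.isPreconnected.induction₂' (fun s t => FlowsTo g (γ s) (γ t) (t - s))
    (fun s hs => ?_) (fun r s t _ _ _ hrs hst => ?_) hs ht
  · obtain ⟨φ, I, B, hφ, hB⟩ := exists_isAnalyticFlowOn (hg s hs)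
    have hI : I ∈ 𝓝 (0 : ℝ) := hφ.isOpen_time.mem_nhds hφ.zero_mem_time
    have hforward : ∀ᶠ t in 𝓝[S] s, t - s ∈ I := nhdsWithin_le_nhds <|
      (show Continuous fun t => t - s by fun_prop).tendsto' s 0 (sub_self s) hI
    have hbackward : ∀ᶠ t in 𝓝[S] s, s - t ∈ I := nhdsWithin_le_nhds <|
      (show Continuous fun t => s - t by fun_prop).tendsto' s 0 (sub_self s) hI
    filter_upwards [self_mem_nhdsWithin, hforward, hbackward,
      (hγ.continuousWithinAt hs) (hφ.isOpen_init.mem_nhds hB)] with t ht hts hst htB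
    exact ⟨⟨φ, I, B, hφ, hts, hB, hφ.apply_sub_eq hS hγ hs ht hts hB⟩,
      ⟨φ, I, B, hφ, hst, htB, hφ.apply_sub_eq hS hγ ht hs hst htB⟩⟩
  · simpa using hrs.trans hst

end AnalyticFlow

theorem exists_lt_exists_gt_Ioo_subset {α : Type*} [LinearOrder α] [TopologicalSpace α]
    [OrderTopology α] [NoMinOrder α] [NoMaxOrder α] {I : Set α} (hI : IsOpen I)
    (hconn : I.OrdConnected) {a b : α} (ha : a ∈ I) (hb : b ∈ I) :
    ∃ l < a, ∃ u > b, Ioo l u ⊆ I := by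
  obtain ⟨l, hl, hlI⟩ := exists_Ioc_subset_of_mem_nhds (hI.mem_nhds ha) (exists_lt a)
  obtain ⟨u, hu, huI⟩ := exists_Ico_subset_of_mem_nhds (hI.mem_nhds hb) (exists_gt b)
  refine ⟨l, hl, u, hu, fun r hr => ?_⟩
  rcases le_total r a with hra | har
  · exact hlI ⟨hr.1, hra⟩
  rcases le_total b r with hbr | hrb
  · exact huI ⟨hbr, hr.2⟩
  · exact hconn.out ha hb ⟨har, hrb⟩

section Parameters

variable {E F : Type*} [NormedAddCommGroup E] [NormedSpace ℝ E] [NormedAddCommGroup F]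
  [NormedSpace ℝ F] {f : E × F → E}

theorem IsAnalyticFlowOn.snd_apply {φ : ℝ × E × F → E × F} {I : Set ℝ} {B : Set (E × F)}
    (hφ : IsAnalyticFlowOn (fun q => (f q, 0)) φ I B) {t : ℝ} (ht : t ∈ I) {q : E × F}
    (hq : q ∈ B) : (φ (t, q)).2 = q.2 :=
  eqOn_of_isIntegralCurveOn (g := fun _ => 0) (b := fun _ => q.2) hφ.ordConnected_time
    (fun r hr => (hφ.isIntegralCurveOn hq r hr).snd)
    (fun r _ => hasDerivWithinAt_const r _ _) (fun _ _ => contDiffAt_const) hφ.zero_mem_time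
    (by rw [hφ.apply_zero q hq]) ht

theorem stmt_17_general [CompleteSpace E] [CompleteSpace F] {α₀ : F} {x₀ : E} {T : ℝ} (hT : 0 ≤ T)
    {X₀ : ℝ → E} (hX₀0 : X₀ 0 = x₀)
    (hX₀ : IsIntegralCurveOn X₀ (fun _ x => f (x, α₀)) (Icc 0 T))
    (hf : ∀ t ∈ Icc 0 T, AnalyticAt ℝ f (X₀ t, α₀)) :
    ∃ (t₀ t₁ : ℝ) (Vα : Set F) (Vx : Set E),
      0 < t₀ ∧ T < t₁ ∧ IsOpen Vα ∧ α₀ ∈ Vα ∧ IsOpen Vx ∧ x₀ ∈ Vx ∧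
      ∃ X : ℝ × F × E → E,
        AnalyticOnNhd ℝ X (Ioo (-t₀) t₁ ×ˢ Vα ×ˢ Vx) ∧
        (∀ α ∈ Vα, ∀ x ∈ Vx, X (0, α, x) = x) ∧
        ∀ t ∈ Ioo (-t₀) t₁, ∀ α ∈ Vα, ∀ x ∈ Vx,
          HasDerivAt (fun s => X (s, α, x)) (f (X (t, α, x), α)) t := by
  have hcurve : IsIntegralCurveOn (fun t => (X₀ t, α₀)) (fun _ q => (f q, 0)) (Icc 0 T) :=
    fun t ht => (hX₀ t ht).prodMk (hasDerivWithinAt_const t _ α₀)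
  obtain ⟨φ, I, B, hφ, hTI, hB, -⟩ := flowsTo_of_isIntegralCurveOn ordConnected_Icc hcurve
    (fun t ht => (hf t ht).prod analyticAt_const) (left_mem_Icc.2 hT) (right_mem_Icc.2 hT)
  rw [sub_zero] at hTI
  rw [hX₀0] at hB
  obtain ⟨l, hl, t₁, ht₁, hI⟩ :=
    exists_lt_exists_gt_Ioo_subset hφ.isOpen_time hφ.ordConnected_time hφ.zero_mem_time hTI
  obtain ⟨Vx, Vα, hVx, hVα, hx₀, hα₀, hV⟩ := isOpen_prod_iff.1 hφ.isOpen_init x₀ α₀ hB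
  rw [← neg_neg l] at hI
  have hsol : ∀ t ∈ Ioo (- -l) t₁, ∀ α ∈ Vα, ∀ x ∈ Vx,
      IsAnalyticSolutionAt (fun q => (f q, 0)) φ (t, x, α) := fun t ht α hα x hx =>
    hφ.isAnalyticSolutionAt _ ⟨hI ht, hV ⟨hx, hα⟩⟩
  refine ⟨-l, t₁, Vα, Vx, neg_pos.2 hl, ht₁, hVα, hα₀, hVx, hx₀, fun q => (φ (q.1, q.2.2, q.2.1)).1,
    ?_, fun α hα x hx => ?_, fun t ht α hα x hx => ?_⟩
  · rintro ⟨t, α, x⟩ ⟨ht, hα, hx⟩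
    have hswap : AnalyticAt ℝ (fun q : ℝ × F × E => (q.1, q.2.2, q.2.1)) (t, α, x) :=
      analyticAt_fst.prod
        ((analyticAt_snd.fun_comp analyticAt_snd).prod (analyticAt_fst.fun_comp analyticAt_snd))
    exact analyticAt_fst.fun_comp
      (AnalyticAt.fun_comp (g := φ) (hsol t ht α hα x hx).analyticAt hswap)
  · exact congrArg Prod.fst (hφ.apply_zero (x, α) (hV ⟨hx, hα⟩))
  · have hsnd : (φ (t, x, α)).2 = α := hφ.snd_apply (hI ht) (hV ⟨hx, hα⟩)
    have hderiv : HasDerivAt (fun s => (φ (s, x, α)).1) (f (φ (t, x, α))) t :=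
      (hsol t ht α hα x hx).hasDerivAt.fst
    rwa [← Prod.mk.eta (p := φ (t, x, α)), hsnd] at hderiv

end Parameters

/-- Analytic dependence of ODE solutions on time, parameters and initial conditions:
if `f : ℝ^k × ℝ^n → ℝ^k` is entire real-analytic and the IVP `X' = f(X, α₀)`,
`X(0) = x₀` has a solution on `[0, T]`, then there are `t₀ > 0`, `t₁ > T` and open
neighborhoods `Vα ∋ α₀`, `Vx ∋ x₀` on which a jointly real-analytic flow
`X(t, α, x)` exists, with `X(0, α, x) = x` and `∂X/∂t = f(X, α)`. -/
theorem stmt_17 (k n : ℕ) (f : (Fin k → ℝ) × (Fin n → ℝ) → (Fin k → ℝ))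
    (hf : ∀ z, ∃ pser : FormalMultilinearSeries ℝ ((Fin k → ℝ) × (Fin n → ℝ)) (Fin k → ℝ),
      HasFPowerSeriesOnBall f pser z ⊤)
    (α₀ : Fin n → ℝ) (x₀ : Fin k → ℝ) (T : ℝ) (hT : 0 ≤ T)
    (X₀ : ℝ → (Fin k → ℝ)) (hX₀0 : X₀ 0 = x₀)
    (hX₀ : ∀ t ∈ Set.Icc (0 : ℝ) T, HasDerivAt X₀ (f (X₀ t, α₀)) t) :
    ∃ (t₀ t₁ : ℝ) (Vα : Set (Fin n → ℝ)) (Vx : Set (Fin k → ℝ)),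
      0 < t₀ ∧ T < t₁ ∧ IsOpen Vα ∧ α₀ ∈ Vα ∧ IsOpen Vx ∧ x₀ ∈ Vx ∧
      ∃ X : ℝ × (Fin n → ℝ) × (Fin k → ℝ) → (Fin k → ℝ),
        AnalyticOnNhd ℝ X (Set.Ioo (-t₀) t₁ ×ˢ Vα ×ˢ Vx) ∧
        (∀ α ∈ Vα, ∀ x ∈ Vx, X (0, α, x) = x) ∧
        ∀ t ∈ Set.Ioo (-t₀) t₁, ∀ α ∈ Vα, ∀ x ∈ Vx,
          HasDerivAt (fun s => X (s, α, x)) (f (X (t, α, x), α)) t := by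
  refine stmt_17_general hT hX₀0 (fun t ht => (hX₀ t ht).hasDerivWithinAt) fun t _ => ?_
  obtain ⟨_, hseries⟩ := hf (X₀ t, α₀)
  exact hseries.analyticAt
end

section
/- Let f : ℝ^k × ℝ^n → ℝ^k be real-analytic on all of ℝ^k × ℝ^n with infinite radius of convergence, let N ≥ 1 with n ≤ Nk, and define F : (ℝ^k)^N × ℝ^n → (ℝ^k)^N by F(y, α) = (f(y₁, α), …, f(y_N, α)). Let α₀ ∈ ℝ^n, x₀ ∈ ℝ^k, set y₀ = (x₀, …, x₀), and assume the partial derivative ∂f/∂α(x₀, α₀) : ℝ^n → ℝ^k stacked over the N copies, i.e. ∂F/∂α(y₀, α₀) : ℝ^n → (ℝ^k)^N, is injective. Suppose Y : (−t₀, t₁) × V_{α₀} × V_{y₀} → (ℝ^k)^N is jointly real-analytic on the connected open set (−t₀, t₁) × V_{α₀} × V_{y₀} (with 0 ∈ (−t₀, t₁), α₀ ∈ V_{α₀}, y₀ ∈ V_{y₀}) and satisfies ∂Y/∂t(t, α, y) = F(Y(t, α, y), α) and Y(0, α, y) = y. Then there exists a set 𝒜 ⊂ (−t₀, t₁) ×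 V_{α₀} × V_{y₀} of Lebesgue measure zero such that for every (t, α, y) not in 𝒜, the partial derivative ∂Y/∂α(t, α, y) : ℝ^n → (ℝ^k)^N is injective; equivalently, (∂Y/∂α)ᵀ(∂Y/∂α)(t, α, y) is positive definite. -/
open MeasureTheory

open Filter Function Set
open scoped Topology

/-!
By symmetry of second derivatives, `A(t) = ∂Y/∂α(t, α₀, y₀)` satisfies `A(0) = 0` and
`A'(0) = ∂v/∂α(α₀)`, where `v(α) = F(y₀, α)` is the initial velocity. As `A'(0)` is injective and
injectivity is an open condition, `A(s)` is injective for small `s ≠ 0`. Fix a left inverse `L` of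
such an `A(s)`: the analytic function `det (L ∘ ∂Y/∂α)` does not vanish identically, so its zero
set is null, and off that set `∂Y/∂α` is injective.

A nonzero analytic function `g` on a connected open set has a null zero set because near a point
`x` one may choose `z` with `g z ≠ 0` so that every line in direction `z - x` through a point `y`
near `x` contains the point `y + (z - x)`, where `g` does not vanish. On each such line the zeros
are therefore discrete, and Fubini applies.
-/

section ZeroSet

variable {E F : Type*} [NormedAddCommGroup E] [NormedSpace ℝ E]
  [NormedAddCommGroup F] [NormedSpace ℝ F]

theorem measure_zeroSet_eq_zero_real {μ : Measure ℝ} [NullSingletonClass μ] {g : ℝ → F}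
    {I : Set ℝ} (hg : AnalyticOnNhd ℝ g I) (hI : IsPreconnected I) (hne : ∃ s ∈ I, g s ≠ 0) :
    μ {s ∈ I | g s = 0} = 0 := by
  obtain ⟨s, hsI, hs⟩ := hne
  have hIm : MeasurableSet I := hI.ordConnected.measurableSet
  have hcodiscrete : ∀ᶠ t in codiscreteWithin I, g t ≠ 0 :=
    (hg.eqOn_zero_or_eventually_ne_zero_of_preconnected hI).resolve_left fun h => hs (h hsI)
  have hae : ∀ᵐ t ∂μ, t ∈ I → g t ≠ 0 :=
    (ae_restrict_iff' hIm).1 (ae_restrict_le_codiscreteWithin hIm hcodiscrete)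
  simpa only [ae_iff, Classical.not_imp, not_not] using hae

theorem volume_zeroSet_line_eq_zero {g : E → F} {C : Set E} (hg : AnalyticOnNhd ℝ g C)
    (hC : Convex ℝ C) {y d : E} (hne : ∃ s : ℝ, y + s • d ∈ C ∧ g (y + s • d) ≠ 0) :
    volume {s : ℝ | y + s • d ∈ C ∧ g (y + s • d) = 0} = 0 := by
  have hline : AnalyticOnNhd ℝ (fun s : ℝ => y + s • d) univ := fun s _ => by fun_prop
  have hconvex : Convex ℝ ((fun s : ℝ => y + s • d) ⁻¹' C) := by
    simpa [preimage, AffineMap.lineMap_apply, add_comm] using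
      hC.affine_preimage (AffineMap.lineMap (k := ℝ) y (y + d))
  exact measure_zeroSet_eq_zero_real
    (hg.comp (hline.mono (subset_univ _)) (mapsTo_preimage _ _)) hconvex.isPreconnected hne

variable [FiniteDimensional ℝ E] [MeasurableSpace E] [BorelSpace E]
  {μ : Measure E} [μ.IsAddHaarMeasure]

theorem addHaar_eq_zero_of_forall_mem_volume_line_eq_zero {S : Set E} (hS : MeasurableSet S)
    (d : E) (hline : ∀ y ∈ S, volume {s : ℝ | y + s • d ∈ S} = 0) : μ S = 0 := by
  have : ProperSpace E := FiniteDimensional.proper_real E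
  suffices h : ∀ᵐ y ∂μ, y ∈ Sᶜ by
    simpa only [ae_iff, mem_compl_iff, not_not, ofPred_mem_eq] using h
  refine ae_mem_of_ae_add_linearMap_mem (LinearMap.toSpanSingleton ℝ E d) volume μ hS.compl
    fun y => ?_
  simp only [ae_iff, LinearMap.toSpanSingleton_apply, mem_compl_iff, not_not]
  obtain hempty | ⟨s₀, hs₀⟩ := {s : ℝ | y + s • d ∈ S}.eq_empty_or_nonempty
  · rw [hempty, measure_empty]
  · have htranslate : {s : ℝ | y + s • d ∈ S} =
        (fun s => s + -s₀) ⁻¹' {s : ℝ | y + s₀ • d + s • d ∈ S} := by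
      ext s
      simp only [mem_ofPred_eq, mem_preimage, add_assoc, ← add_smul, ← sub_eq_add_neg,
        add_sub_cancel]
    rw [htranslate, measure_preimage_add_right]
    exact hline _ hs₀

theorem exists_mem_nhds_addHaar_zeroSet_eq_zero {g : E → F} {x : E}
    (hg : ∀ᶠ y in 𝓝 x, AnalyticAt ℝ g y) (hne : ∃ᶠ z in 𝓝 x, g z ≠ 0) :
    ∃ V ∈ 𝓝 x, μ {y ∈ V | g y = 0} = 0 := by
  obtain ⟨r, hr, hgr⟩ := Metric.eventually_nhds_iff_ball.1 hg
  obtain ⟨z, hgz, hz⟩ := (hne.and_eventually (Metric.ball_mem_nhds x hr)).exists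
  have hshift : ∀ᶠ y in 𝓝 x, y + (z - x) ∈ Metric.ball x r ∧ g (y + (z - x)) ≠ 0 := by
    have hxz : Tendsto (fun y => y + (z - x)) (𝓝 x) (𝓝 z) := by
      simpa using (continuous_add_const (z - x)).tendsto x
    exact hxz.eventually ((Metric.isOpen_ball.eventually_mem hz).and
      ((hgr z hz).continuousAt.eventually_ne hgz))
  obtain ⟨δ, hδ, hball⟩ := Metric.eventually_nhds_iff_ball.1
    (hshift.and (Metric.isOpen_ball.eventually_mem (Metric.mem_ball_self hr)))
  refine ⟨Metric.ball x δ, Metric.ball_mem_nhds x hδ, ?_⟩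
  have hcont : ContinuousOn g (Metric.ball x δ) := fun y hy =>
    (hgr y (hball y hy).2).continuousAt.continuousWithinAt
  have hmeas : MeasurableSet (Metric.ball x δ ∩ g ⁻¹' {0}) := by
    obtain ⟨Z, hZ, hZeq⟩ := continuousOn_iff_isClosed.1 hcont {0} isClosed_singleton
    rw [inter_comm, hZeq]
    exact hZ.measurableSet.inter Metric.isOpen_ball.measurableSet
  refine addHaar_eq_zero_of_forall_mem_volume_line_eq_zero hmeas (z - x) fun y hy => ?_
  have hshifted : y + (1 : ℝ) • (z - x) ∈ Metric.ball x r ∧ g (y + (1 : ℝ) • (z - x)) ≠ 0 := by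
    simpa only [one_smul] using (hball y hy.1).1
  refine measure_mono_null ?_
    (volume_zeroSet_line_eq_zero hgr (convex_ball x r) ⟨1, hshifted⟩)
  exact fun s hs => ⟨(hball _ hs.1).2, hs.2⟩

theorem addHaar_zeroSet_eq_zero {g : E → F} {U : Set E} (hg : AnalyticOnNhd ℝ g U)
    (hUo : IsOpen U) (hU : IsPreconnected U) (hne : ∃ w ∈ U, g w ≠ 0) :
    μ {x ∈ U | g x = 0} = 0 := by
  have : ProperSpace E := FiniteDimensional.proper_real E
  obtain ⟨w, hwU, hw⟩ := hne
  refine measure_null_of_locally_null _ fun x ⟨hxU, _⟩ => ?_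
  have hfreq : ∃ᶠ z in 𝓝 x, g z ≠ 0 := fun hzero =>
    hw (hg.eqOn_zero_of_preconnected_of_eventuallyEq_zero hU hxU
      (hzero.mono fun _ => not_not.1) hwU)
  obtain ⟨V, hV, hnull⟩ := exists_mem_nhds_addHaar_zeroSet_eq_zero (μ := μ)
    ((hUo.eventually_mem hxU).mono hg) hfreq
  refine ⟨_, inter_mem_nhdsWithin _ hV, measure_mono_null ?_ hnull⟩
  exact fun y hy => ⟨hy.2, hy.1.2⟩

end ZeroSet

section Injectivity

variable {X P E : Type*} [NormedAddCommGroup X] [NormedSpace ℝ X]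
  [NormedAddCommGroup P] [NormedSpace ℝ P] [FiniteDimensional ℝ P]
  [NormedAddCommGroup E] [NormedSpace ℝ E]

theorem analyticAt_clm_det {𝕜 V : Type*} [NontriviallyNormedField 𝕜] [CompleteSpace 𝕜]
    [NormedAddCommGroup V] [NormedSpace 𝕜 V] [FiniteDimensional 𝕜 V] (A : V →L[𝕜] V) :
    AnalyticAt 𝕜 (fun B : V →L[𝕜] V => B.det) A := by
  let b := Module.finBasis 𝕜 V
  have hentry (i j) : AnalyticAt 𝕜 (fun B : V →L[𝕜] V => b.repr (B (b j)) i) A :=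
    ((b.coord i).toContinuousLinearMap ∘L ContinuousLinearMap.apply 𝕜 V (b j)).analyticAt A
  simp only [ContinuousLinearMap.det, ← LinearMap.det_toMatrix b, Matrix.det_apply',
    LinearMap.toMatrix_apply, ContinuousLinearMap.coe_coe]
  fun_prop

theorem hasLeftInverse_of_injective {A : P →L[ℝ] E} (hA : Injective A) : A.HasLeftInverse := by
  let e : P ≃ₗ[ℝ] A.range := LinearEquiv.ofInjective A.toLinearMap hA
  obtain ⟨L, hL⟩ := ContinuousLinearMap.exist_extension_of_finiteDimensional_range
    (e.symm : A.range →ₗ[ℝ] P).toContinuousLinearMap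
  refine ⟨L, fun p => ?_⟩
  have hLe : e.symm (e p) = L (A p) := DFunLike.congr_fun hL (e p)
  rw [← hLe, e.symm_apply_apply]

theorem addHaar_setOf_not_injective_eq_zero [FiniteDimensional ℝ X] [MeasurableSpace X]
    [BorelSpace X] {μ : Measure X} [μ.IsAddHaarMeasure] {A : X → P →L[ℝ] E} {U : Set X}
    (hA : AnalyticOnNhd ℝ A U) (hUo : IsOpen U) (hU : IsPreconnected U)
    (hinj : ∃ w ∈ U, Injective (A w)) : μ {x ∈ U | ¬ Injective (A x)} = 0 := by
  obtain ⟨w, hwU, hw⟩ := hinj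
  obtain ⟨L, hL⟩ := hasLeftInverse_of_injective hw
  have hdet : AnalyticOnNhd ℝ (fun x => (L ∘L A x).det) U := fun x hx =>
    (analyticAt_clm_det _).comp
      (((ContinuousLinearMap.compL ℝ P E P L).analyticAt _).comp (hA x hx))
  have hdetw : (L ∘L A w).det ≠ 0 := by
    have hid : L ∘L A w = .id ℝ P := ContinuousLinearMap.ext hL
    simp [hid, ContinuousLinearMap.det]
  have hinj_of_det (x) (hx : (L ∘L A x).det ≠ 0) : Injective (A x) := by
    have hcomp : Injective (L ∘ A x) :=
      ((L ∘L A x).toContinuousLinearEquivOfDetNeZero hx).injective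
    exact hcomp.of_comp
  refine measure_mono_null ?_ (addHaar_zeroSet_eq_zero hdet hUo hU ⟨w, hwU, hdetw⟩)
  exact fun x hx => ⟨hx.1, not_imp_comm.1 (hinj_of_det x) hx.2⟩

theorem eventually_injective_of_hasDerivAt {A : ℝ → P →L[ℝ] E} {A' : P →L[ℝ] E} {t : ℝ}
    (hA : HasDerivAt A A' t) (ht : A t = 0) (hA' : Injective A') :
    ∀ᶠ s in 𝓝[≠] t, Injective (A s) := by
  have hslope : ∀ᶠ s in 𝓝[≠] t, Injective (slope A t s) :=
    hA.tendsto_slope.eventually (ContinuousLinearMap.isOpen_injective.mem_nhds hA')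
  filter_upwards [hslope] with s hs
  rw [slope_def_module, ht, sub_zero] at hs
  exact fun p q hpq => hs (by simp [hpq])

end Injectivity

section Slice

variable {P Z E : Type*} [NormedAddCommGroup P] [NormedSpace ℝ P] [NormedAddCommGroup Z]
  [NormedSpace ℝ Z] [NormedAddCommGroup E] [NormedSpace ℝ E]

theorem fderiv_slice_snd {T : Type*} [NormedAddCommGroup T] [NormedSpace ℝ T] {ψ : T × P → E}
    {t : T} {α : P} (hψ : DifferentiableAt ℝ ψ (t, α)) :
    fderiv ℝ (fun α' => ψ (t, α')) α = fderiv ℝ ψ (t, α) ∘L .inr ℝ T P :=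
  (hψ.hasFDerivAt.comp α (hasFDerivAt_prodMk_right t α)).fderiv

theorem fderiv_slice_middle {T : Type*} [NormedAddCommGroup T] [NormedSpace ℝ T]
    {Y : T × P × Z → E} {t : T} {α : P} {z : Z} (hY : DifferentiableAt ℝ Y (t, α, z)) :
    fderiv ℝ (fun α' => Y (t, α', z)) α =
      fderiv ℝ Y (t, α, z) ∘L .inr ℝ T (P × Z) ∘L .inl ℝ P Z :=
  (hY.hasFDerivAt.comp α
    ((hasFDerivAt_prodMk_right t (α, z)).comp α (hasFDerivAt_prodMk_left α z))).fderiv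

theorem hasDerivAt_fderiv_slice_snd {ψ : ℝ × P → E} {t₀ : ℝ} {α₀ : P} {v : P → E}
    (hψ : ContDiffAt ℝ 2 ψ (t₀, α₀))
    (hv : ∀ᶠ α in 𝓝 α₀, HasDerivAt (fun s => ψ (s, α)) (v α) t₀) :
    HasDerivAt (fun s => fderiv ℝ (fun α => ψ (s, α)) α₀) (fderiv ℝ v α₀) t₀ := by
  set D := fderiv ℝ ψ
  set D₂ := fderiv ℝ D (t₀, α₀)
  have hD : HasFDerivAt D D₂ (t₀, α₀) :=
    ((hψ.fderiv_right (m := 1) (by norm_num)).differentiableAt (by norm_num)).hasFDerivAt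
  have hdiff : ∀ᶠ x in 𝓝 (t₀, α₀), DifferentiableAt ℝ ψ x :=
    (hψ.eventually (by simp)).mono fun x hx => hx.differentiableAt (by norm_num)
  have hsnd : (fun s => fderiv ℝ (fun α => ψ (s, α)) α₀) =ᶠ[𝓝 t₀]
      fun s => D (s, α₀) ∘L .inr ℝ ℝ P :=
    ((Continuous.prodMk_left α₀).tendsto t₀ |>.eventually hdiff).mono fun s hs =>
      fderiv_slice_snd hs
  have hfst : v =ᶠ[𝓝 α₀] fun α => D (t₀, α) (1, 0) := by
    filter_upwards [hv, (Continuous.prodMk_right t₀).tendsto α₀ |>.eventually hdiff] with α hvα hα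
    exact hvα.unique (hα.hasFDerivAt.comp_hasDerivAt t₀
      ((hasDerivAt_id t₀).prodMk (hasDerivAt_const t₀ α)))
  have hdv : HasFDerivAt v ((ContinuousLinearMap.apply ℝ E ((1 : ℝ), (0 : P))) ∘L
      D₂ ∘L .inr ℝ ℝ P) α₀ :=
    ((ContinuousLinearMap.apply ℝ E ((1 : ℝ), (0 : P))).hasFDerivAt.comp α₀
      (hD.comp α₀ (hasFDerivAt_prodMk_right t₀ α₀))).congr_of_eventuallyEq hfst
  have hsymm : D₂ (1, 0) ∘L .inr ℝ ℝ P = fderiv ℝ v α₀ := by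
    rw [hdv.fderiv]
    ext w
    exact hψ.isSymmSndFDerivAt (by simp) (1, 0) (0, w)
  rw [← hsymm]
  have hcurve : HasDerivAt (fun s => D (s, α₀)) (D₂ (1, 0)) t₀ :=
    hD.comp_hasDerivAt t₀ ((hasDerivAt_id t₀).prodMk (hasDerivAt_const t₀ α₀))
  refine HasDerivAt.congr_of_eventuallyEq ?_ hsnd
  simpa using hcurve.clm_comp (hasDerivAt_const t₀ (ContinuousLinearMap.inr ℝ ℝ P))

theorem eventually_injective_fderiv_slice_snd [FiniteDimensional ℝ P] {ψ : ℝ × P → E} {t₀ : ℝ}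
    {α₀ : P} {v : P → E} {c : E} (hψ : ContDiffAt ℝ 2 ψ (t₀, α₀))
    (hc : ∀ᶠ α in 𝓝 α₀, ψ (t₀, α) = c)
    (hv : ∀ᶠ α in 𝓝 α₀, HasDerivAt (fun s => ψ (s, α)) (v α) t₀)
    (hinj : Injective (fderiv ℝ v α₀)) :
    ∀ᶠ s in 𝓝[≠] t₀, Injective (fderiv ℝ (fun α => ψ (s, α)) α₀) := by
  have hzero : fderiv ℝ (fun α => ψ (t₀, α)) α₀ = 0 := by
    have hconst : (fun α => ψ (t₀, α)) =ᶠ[𝓝 α₀] fun _ => c := hc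
    rw [hconst.fderiv_eq, fderiv_fun_const, Pi.zero_apply]
  exact eventually_injective_of_hasDerivAt (hasDerivAt_fderiv_slice_snd hψ hv) hzero hinj

theorem stmt_18_general [FiniteDimensional ℝ P] [FiniteDimensional ℝ Z]
    [MeasurableSpace (ℝ × P × Z)] [BorelSpace (ℝ × P × Z)] {μ : Measure (ℝ × P × Z)}
    [μ.IsAddHaarMeasure] {U : Set (ℝ × P × Z)} (hUo : IsOpen U) (hU : IsPreconnected U)
    {Y : ℝ × P × Z → E} (hY : AnalyticOnNhd ℝ Y U) {t₀ : ℝ} {α₀ : P} {z₀ : Z}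
    (h₀ : (t₀, α₀, z₀) ∈ U) {c : E} (hinit : ∀ᶠ α in 𝓝 α₀, Y (t₀, α, z₀) = c) {v : P → E}
    (hv : ∀ᶠ α in 𝓝 α₀, HasDerivAt (fun s => Y (s, α, z₀)) (v α) t₀)
    (hinj : Injective (fderiv ℝ v α₀)) :
    μ {x ∈ U | ¬ Injective (fderiv ℝ (fun α => Y (x.1, α, x.2.2)) x.2.1)} = 0 := by
  have hslice (x) (hx : x ∈ U) : fderiv ℝ (fun α => Y (x.1, α, x.2.2)) x.2.1 =
      fderiv ℝ Y x ∘L .inr ℝ ℝ (P × Z) ∘L .inl ℝ P Z :=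
    fderiv_slice_middle (hY x hx).differentiableAt
  have hanalytic : AnalyticOnNhd ℝ
      (fun x : ℝ × P × Z => fderiv ℝ (fun α => Y (x.1, α, x.2.2)) x.2.1) U := by
    refine AnalyticOnNhd.congr hUo (fun x hx => ?_) fun x hx => (hslice x hx).symm
    exact (((ContinuousLinearMap.compL ℝ P (ℝ × P × Z) E).flip _).analyticAt _).comp
      (hY.fderiv_of_isOpen hUo x hx)
  have hsmooth : ContDiffAt ℝ 2 (fun x : ℝ × P => Y (x.1, x.2, z₀)) (t₀, α₀) :=
    ContDiffAt.comp (t₀, α₀)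
      ((hY.contDiffOn hUo.uniqueDiffOn).contDiffAt (hUo.mem_nhds h₀)) (by fun_prop)
  have hU₀ : ∀ᶠ s in 𝓝 t₀, (s, α₀, z₀) ∈ U :=
    (Continuous.prodMk_left (α₀, z₀)).tendsto t₀ |>.eventually (hUo.eventually_mem h₀)
  obtain ⟨s, hs, hsU⟩ :=
    ((eventually_injective_fderiv_slice_snd hsmooth hinit hv hinj).and
      (hU₀.filter_mono nhdsWithin_le_nhds)).exists
  exact addHaar_setOf_not_injective_eq_zero hanalytic hUo hU ⟨_, hsU, hs⟩

end Slice

theorem isAddHaarMeasure_volume_real_prod_pi_prod_pi (ι κ η : Type*) [Fintype ι] [Fintype κ]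
    [Fintype η] : (volume : Measure (ℝ × (ι → ℝ) × (κ → η → ℝ))).IsAddHaarMeasure := by
  have hpi : (volume : Measure (κ → η → ℝ)).IsAddHaarMeasure := Measure.pi.isAddHaarMeasure _
  have hprod : (volume : Measure ((ι → ℝ) × (κ → η → ℝ))).IsAddHaarMeasure :=
    Measure.prod.instIsAddHaarMeasure _ _
  exact Measure.prod.instIsAddHaarMeasure _ _

/-- Generic full rank of the parameter derivative of an analytic flow: let `f` be
entire real-analytic, `n ≤ Nk`, `F(y,α) = (f(y₁,α),…,f(y_N,α))`, assume
`∂F/∂α(y₀,α₀)` is injective for `y₀ = (x₀,…,x₀)`, and let `Y` be a jointly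
real-analytic solution of `∂Y/∂t = F(Y,α)`, `Y(0,α,y) = y` on the connected open set
`(−t₀,t₁) × Vα × Vy`. Then off a Lebesgue-null subset `𝒜` of this set, the parameter
derivative `∂Y/∂α(t,α,y) : ℝ^n → (ℝ^k)^N` is injective (equivalently,
`(∂Y/∂α)ᵀ(∂Y/∂α)` is positive definite). -/
theorem stmt_18 (k n N : ℕ) (hN : 1 ≤ N) (hnk : n ≤ N * k)
    (f : (Fin k → ℝ) × (Fin n → ℝ) → (Fin k → ℝ))
    (hf : ∀ z, ∃ pser : FormalMultilinearSeries ℝ ((Fin k → ℝ) × (Fin n → ℝ)) (Fin k → ℝ),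
      HasFPowerSeriesOnBall f pser z ⊤)
    (α₀ : Fin n → ℝ) (x₀ : Fin k → ℝ)
    (hinj : Function.Injective
      (fderiv ℝ (fun α : Fin n → ℝ => fun _i : Fin N => f (x₀, α)) α₀))
    (t₀ t₁ : ℝ) (ht₀ : 0 < t₀) (ht₁ : 0 < t₁)
    (Vα : Set (Fin n → ℝ)) (Vy : Set (Fin N → Fin k → ℝ))
    (hVαo : IsOpen Vα) (hVyo : IsOpen Vy)
    (hα₀ : α₀ ∈ Vα) (hy₀ : (fun _ : Fin N => x₀) ∈ Vy)
    (hconn : IsConnected (Set.Ioo (-t₀) t₁ ×ˢ Vα ×ˢ Vy))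
    (Y : ℝ × (Fin n → ℝ) × (Fin N → Fin k → ℝ) → (Fin N → Fin k → ℝ))
    (hY : AnalyticOnNhd ℝ Y (Set.Ioo (-t₀) t₁ ×ˢ Vα ×ˢ Vy))
    (hODE : ∀ t ∈ Set.Ioo (-t₀) t₁, ∀ α ∈ Vα, ∀ y ∈ Vy,
      HasDerivAt (fun s => Y (s, α, y)) (fun i => f (Y (t, α, y) i, α)) t)
    (hinit : ∀ α ∈ Vα, ∀ y ∈ Vy, Y (0, α, y) = y) :
    ∃ 𝒜 : Set (ℝ × (Fin n → ℝ) × (Fin N → Fin k → ℝ)),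
      𝒜 ⊆ Set.Ioo (-t₀) t₁ ×ˢ Vα ×ˢ Vy ∧ volume 𝒜 = 0 ∧
      ∀ t ∈ Set.Ioo (-t₀) t₁, ∀ α ∈ Vα, ∀ y ∈ Vy, (t, α, y) ∉ 𝒜 →
        Function.Injective (fderiv ℝ (fun α' => Y (t, α', y)) α) := by
  have hhaar := isAddHaarMeasure_volume_real_prod_pi_prod_pi (Fin n) (Fin N) (Fin k)
  have h0 : (0 : ℝ) ∈ Ioo (-t₀) t₁ := ⟨neg_lt_zero.2 ht₀, ht₁⟩
  refine ⟨_, sep_subset _ _, stmt_18_general (isOpen_Ioo.prod (hVαo.prod hVyo))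
    hconn.isPreconnected hY ⟨h0, hα₀, hy₀⟩
    ((hVαo.eventually_mem hα₀).mono fun α hα => hinit α hα _ hy₀)
    ((hVαo.eventually_mem hα₀).mono fun α hα => ?_) hinj,
    fun t ht α hα y hy h => by_contra fun hn => h ⟨⟨ht, hα, hy⟩, hn⟩⟩
  simpa only [hinit α hα _ hy₀] using hODE 0 h0 α hα _ hy₀
end
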